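/- arXiv:1609.09526 — 3 statements merged into one kernel-verified Lean document; each statement's English description precedes it below -/
import Mathlib

section
/- Let P be a lattice polygon with i(P) ≥ 1. Then either (b(P), i(P)) = (9, 1) or b(P) ≤ 2·i(P) + 6. -/
open MeasureTheory

/-- The point of `ℝ²` corresponding to an integer point. -/
def toR2 (z : ℤ × ℤ) : ℝ × ℝ := ((z.1 : ℝ), (z.2 : ℝ))

/-- A lattice polygon: a two-dimensional convex hull of finitely many integer points. -/
def IsLatticePolygon (P : Set (ℝ × ℝ)) : Prop :=
  ∃ S : Finset (ℤ × ℤ), P = convexHull ℝ (toR2 '' (S : Set (ℤ × ℤ))) ∧ affineSpan ℝ P = ⊤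

/-- A lattice triangle: the convex hull of three affinely independent integer points. -/
def IsLatticeTriangle (T : Set (ℝ × ℝ)) : Prop :=
  ∃ v0 v1 v2 : ℤ × ℤ, AffineIndependent ℝ ![toR2 v0, toR2 v1, toR2 v2] ∧
    T = convexHull ℝ {toR2 v0, toR2 v1, toR2 v2}

/-- The number of lattice points on the boundary. -/
noncomputable def bcount (P : Set (ℝ × ℝ)) : ℕ :=
  Set.ncard {z : ℤ × ℤ | toR2 z ∈ frontier P}

/-- The number of lattice points in the interior. -/
noncomputable def icount (P : Set (ℝ × ℝ)) : ℕ :=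
  Set.ncard {z : ℤ × ℤ | toR2 z ∈ interior P}

/-- The Euclidean area. -/
noncomputable def area (P : Set (ℝ × ℝ)) : ℝ := (volume P).toReal



/-- Hull of a finite set of lattice points. -/
def LP (P : Set (ℝ × ℝ)) : Prop :=
  ∃ S : Finset (ℤ × ℤ), P = convexHull ℝ (toR2 '' (S : Set (ℤ × ℤ)))

/-- Finsets of lattice points: all, and interior ones. -/
structure LData (P : Set (ℝ × ℝ)) (L I : Finset (ℤ × ℤ)) : Prop where
  conv : Convex ℝ P
  memL : ∀ z, z ∈ L ↔ toR2 z ∈ P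
  memI : ∀ z, z ∈ I ↔ toR2 z ∈ interior P
  bc : bcount P = (L \ I).card
  ic : icount P = I.card
  hull : P = convexHull ℝ (toR2 '' (L : Set (ℤ × ℤ)))

lemma toR2_inj : Function.Injective toR2 := by
  intro a b h
  simp only [toR2, Prod.mk.injEq, Int.cast_inj] at h
  exact Prod.ext h.1 h.2

lemma LP.data {P : Set (ℝ × ℝ)} (h : LP P) : ∃ L I, LData P L I := by
  obtain ⟨S, rfl⟩ := h
  set P := convexHull ℝ (toR2 '' (S : Set (ℤ × ℤ))) with hPdef
  have hconv : Convex ℝ P := convex_convexHull ℝ _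
  have hcomp : IsCompact P := (S.finite_toSet.image toR2).isCompact_convexHull ℝ
  have hfin : {z : ℤ × ℤ | toR2 z ∈ P}.Finite := by
    obtain ⟨R, hR⟩ := hcomp.isBounded.subset_closedBall 0
    refine (Set.finite_Icc ((-⌈R⌉, -⌈R⌉) : ℤ × ℤ) (⌈R⌉, ⌈R⌉)).subset ?_
    intro z hz
    have h1 := hR hz
    rw [mem_closedBall_zero_iff, Prod.norm_def] at h1
    have h2 := le_trans (le_max_left _ _) h1
    have h3 := le_trans (le_max_right _ _) h1
    simp only [toR2, Real.norm_eq_abs, abs_le] at h2 h3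
    have := Int.le_ceil R
    refine ⟨⟨?_, ?_⟩, ⟨?_, ?_⟩⟩ <;> simp only <;> (rify; linarith)
  have hfinI : {z : ℤ × ℤ | toR2 z ∈ interior P}.Finite :=
    hfin.subset fun z (hz : toR2 z ∈ interior P) => (interior_subset hz : toR2 z ∈ P)
  refine ⟨hfin.toFinset, hfinI.toFinset, hconv, by simp, by simp, ?_, ?_, ?_⟩
  · rw [bcount, ← Set.ncard_coe_finset]
    congr 1
    ext z
    simp [frontier, hcomp.isClosed.closure_eq]
  · rw [icount, ← Set.ncard_coe_finset]
    congr 1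
    ext z
    simp
  · apply Set.Subset.antisymm
    · apply convexHull_mono
      apply Set.image_mono
      intro z hz
      simp only [Set.Finite.coe_toFinset, Set.mem_ofPred_eq]
      exact subset_convexHull ℝ _ ⟨z, hz, rfl⟩
    · apply convexHull_min _ hconv
      rintro _ ⟨z, hz, rfl⟩
      simpa using hz

/-- Supporting functional at a non-interior point. -/
lemma supp {P : Set (ℝ × ℝ)} (hc : Convex ℝ P) (hne : (interior P).Nonempty) {p : ℝ × ℝ}
    (hp : p ∉ interior P) :
    ∃ α β : ℝ, (α ≠ 0 ∨ β ≠ 0) ∧ ∀ q ∈ P, α * q.1 + β * q.2 ≤ α * p.1 + β * p.2 := by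
  obtain ⟨f, hf⟩ := geometric_hahn_banach_open_point hc.interior isOpen_interior hp
  have hrep : ∀ q : ℝ × ℝ, f q = f (1, 0) * q.1 + f (0, 1) * q.2 := by
    intro q
    have : q = q.1 • ((1, 0) : ℝ × ℝ) + q.2 • ((0, 1) : ℝ × ℝ) := by ext <;> simp
    conv_lhs => rw [this, map_add, map_smul, map_smul]
    simp [mul_comm]
  refine ⟨f (1, 0), f (0, 1), ?_, ?_⟩
  · by_contra! h
    obtain ⟨a, ha⟩ := hne
    have := hf a ha
    rw [hrep a, hrep p, h.1, h.2] at this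
    simp at this
  · intro q hq
    rw [← hrep, ← hrep]
    have hq' : q ∈ closure (interior P) := by
      rw [hc.closure_interior_eq_closure_of_nonempty_interior hne]
      exact subset_closure hq
    have hcl : IsClosed {x : ℝ × ℝ | f x ≤ f p} := isClosed_le f.continuous continuous_const
    exact closure_minimal (fun x hx => (hf x hx).le) hcl hq'

lemma interior_strict {P : Set (ℝ × ℝ)} {p : ℝ × ℝ} (hp : p ∈ interior P) :
    (∃ q ∈ P, p.2 < q.2) ∧ (∃ q ∈ P, q.2 < p.2) := by
  have key : ∀ s : ℝ, s ≠ 0 → ∃ t : ℝ, 0 < t ∧ (p.1, p.2 + t * s) ∈ P := by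
    intro s _
    have hcont : Filter.Tendsto (fun t : ℝ => (p.1, p.2 + t * s)) (nhds 0) (nhds p) := by
      have : Continuous (fun t : ℝ => (p.1, p.2 + t * s)) := by fun_prop
      have := this.tendsto 0
      simpa using this
    have h1 := hcont.eventually (mem_interior_iff_mem_nhds.mp hp)
    have h2 := h1.filter_mono (nhdsWithin_le_nhds (s := Set.Ioi 0))
    obtain ⟨t, ht, ht'⟩ := (h2.and self_mem_nhdsWithin).exists
    exact ⟨t, ht', ht⟩
  constructor
  · obtain ⟨t, ht, h⟩ := key 1 (by norm_num)
    exact ⟨_, h, by simp only; linarith⟩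
  · obtain ⟨t, ht, h⟩ := key (-1) (by norm_num)
    exact ⟨_, h, by simp only; linarith⟩

/-- Points strictly inside a row with something above and below are interior. -/
lemma mid_interior {P : Set (ℝ × ℝ)} (hc : Convex ℝ P) {x1 x x2 y : ℝ} {u d : ℝ × ℝ}
    (h1 : (x1, y) ∈ P) (h2 : (x2, y) ∈ P) (hu : u ∈ P) (hd : d ∈ P)
    (hx1 : x1 < x) (hx2 : x < x2) (hyu : y < u.2) (hyd : d.2 < y) :
    (x, y) ∈ interior P := by
  have hne : (interior P).Nonempty := by
    rw [hc.interior_nonempty_iff_affineSpan_eq_top,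
      AffineSubspace.affineSpan_eq_top_iff_vectorSpan_eq_top_of_nonempty ℝ (ℝ × ℝ) (ℝ × ℝ) ⟨_, h1⟩]
    have e1 : ((x2 - x1, 0) : ℝ × ℝ) ∈ vectorSpan ℝ P := by
      have := vsub_mem_vectorSpan ℝ h2 h1
      simpa using this
    have e2 : ((u.1 - d.1, u.2 - d.2) : ℝ × ℝ) ∈ vectorSpan ℝ P := by
      have := vsub_mem_vectorSpan ℝ hu hd
      exact this
    rw [eq_top_iff]
    intro q _
    have hA : x2 - x1 ≠ 0 := by linarith
    have hB : u.2 - d.2 ≠ 0 := by linarith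
    have : q = ((q.1 - q.2 / (u.2 - d.2) * (u.1 - d.1)) / (x2 - x1)) • ((x2 - x1, 0) : ℝ × ℝ)
        + (q.2 / (u.2 - d.2)) • ((u.1 - d.1, u.2 - d.2) : ℝ × ℝ) := by
      ext
      · simp only [Prod.smul_mk, smul_eq_mul, Prod.fst_add]
        field_simp
        ring
      · simp only [Prod.smul_mk, smul_eq_mul, Prod.snd_add]
        field_simp
        ring
    rw [this]
    exact Submodule.add_mem _ (Submodule.smul_mem _ _ e1) (Submodule.smul_mem _ _ e2)
  by_contra hcon
  obtain ⟨α, β, hab, hs⟩ := supp hc hne hcon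
  have s1 := hs _ h1
  have s2 := hs _ h2
  have s3 := hs _ hu
  have s4 := hs _ hd
  simp only at s1 s2 s3 s4
  have ha : α = 0 := by
    apply le_antisymm
    · by_contra! h; nlinarith
    · by_contra! h; nlinarith
  subst ha
  have hb : β = 0 := by
    apply le_antisymm
    · by_contra! h; nlinarith
    · by_contra! h; nlinarith
  simp [hb] at hab

/-- Horizontal interpolation. -/
lemma row_combo {P : Set (ℝ × ℝ)} (hc : Convex ℝ P) {a b y1 y2 : ℝ} (t : ℝ) (ht0 : 0 ≤ t)
    (ht1 : t ≤ 1) (h1 : (a, y1) ∈ P) (h2 : (b, y2) ∈ P) {x y : ℝ}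
    (hx : x = (1 - t) * a + t * b) (hy : y = (1 - t) * y1 + t * y2) : (x, y) ∈ P := by
  have := hc h1 h2 (sub_nonneg.2 ht1) ht0 (by ring)
  simpa [hx, hy] using this

lemma row_combo_int {P : Set (ℝ × ℝ)} (hc : Convex ℝ P) {a b y1 y2 : ℝ} (t : ℝ) (ht0 : 0 ≤ t)
    (ht1 : t < 1) (h1 : (a, y1) ∈ interior P) (h2 : (b, y2) ∈ P) {x y : ℝ}
    (hx : x = (1 - t) * a + t * b) (hy : y = (1 - t) * y1 + t * y2) : (x, y) ∈ interior P := by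
  have := hc.combo_interior_self_mem_interior h1 h2 (sub_pos.2 ht1) ht0 (by ring)
  simpa [hx, hy] using this

/-- The fat row lemma, counting version. -/
lemma row_count {P : Set (ℝ × ℝ)} {L I : Finset (ℤ × ℤ)} (D : LData P L I)
    {y : ℤ} {α β : ℝ} {u d : ℝ × ℝ} (h1 : (α, (y : ℝ)) ∈ P) (h2 : (β, (y : ℝ)) ∈ P)
    (hu : u ∈ P) (hd : d ∈ P) (hyu : (y : ℝ) < u.2) (hyd : d.2 < y) :
    β - α - 1 ≤ ((I.filter (fun z => z.2 = y)).card : ℝ) := by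
  have hsub : (Finset.Ioo ⌊α⌋ ⌈β⌉).image (fun x => (x, y)) ⊆ I.filter (fun z => z.2 = y) := by
    intro z hz
    simp only [Finset.mem_image, Finset.mem_Ioo] at hz
    obtain ⟨x, ⟨hx1, hx2⟩, rfl⟩ := hz
    simp only [Finset.mem_filter, and_true, D.memI, toR2]
    exact mid_interior D.conv h1 h2 hu hd (Int.floor_lt.1 hx1) (Int.lt_ceil.1 hx2) hyu hyd
  have hcard := Finset.card_le_card hsub
  rw [Finset.card_image_of_injective _ (fun a b h => by simpa using h), Int.card_Ioo] at hcard
  have h3 : ⌈β⌉ - ⌊α⌋ - 1 ≤ ((⌈β⌉ - ⌊α⌋ - 1).toNat : ℤ) := Int.self_le_toNat _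
  have h4 : ⌈β⌉ - ⌊α⌋ - 1 ≤ ((I.filter (fun z => z.2 = y)).card : ℤ) := by omega
  have h5 : ((⌈β⌉ - ⌊α⌋ - 1 : ℤ) : ℝ) ≤ ((I.filter (fun z => z.2 = y)).card : ℝ) := by
    exact_mod_cast h4
  push_cast at h5
  have := Int.le_ceil β
  have := Int.floor_le α
  linarith

lemma three_row {P : Set (ℝ × ℝ)} {L I : Finset (ℤ × ℤ)} (D : LData P L I)
    {y x1 x x2 : ℤ} {u d : ℝ × ℝ} (h1 : (x1, y) ∈ L) (h2 : (x2, y) ∈ L)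
    (hx1 : x1 < x) (hx2 : x < x2)
    (hu : u ∈ P) (hd : d ∈ P) (hyu : (y : ℝ) < u.2) (hyd : d.2 < y) : (x, y) ∈ I := by
  rw [D.memL] at h1 h2
  rw [D.memI]
  exact mid_interior D.conv h1 h2 hu hd (by exact_mod_cast hx1) (by exact_mod_cast hx2) hyu hyd

lemma row_bdry {P : Set (ℝ × ℝ)} {L I : Finset (ℤ × ℤ)} (D : LData P L I)
    {y : ℤ} {u d : ℝ × ℝ} (hu : u ∈ P) (hd : d ∈ P) (hyu : (y : ℝ) < u.2) (hyd : d.2 < y) :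
    ((L \ I).filter (fun z => z.2 = y)).card ≤ 2 := by
  by_contra! h
  obtain ⟨a, b, c, ha, hb, hc, hab, hac, hbc⟩ := Finset.two_lt_card_iff.1 h
  obtain ⟨a, a'⟩ := a
  obtain ⟨b, b'⟩ := b
  obtain ⟨c, c'⟩ := c
  simp only [Finset.mem_filter, Finset.mem_sdiff] at ha hb hc
  obtain ⟨⟨ha, ha2⟩, rfl⟩ := ha
  obtain ⟨⟨hb, hb2⟩, rfl⟩ := hb
  obtain ⟨⟨hc, hc2⟩, rfl⟩ := hc
  have key : ∀ x1 x x2 : ℤ, (x1, c') ∈ L → (x2, c') ∈ L → (x, c') ∉ I → x1 < x → ¬ x < x2 :=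
    fun x1 x x2 h1 h2 h3 h4 h5 => h3 (three_row D h1 h2 h4 h5 hu hd hyu hyd)
  have hab : a ≠ b := fun h => hab (by rw [h])
  have hac : a ≠ c := fun h => hac (by rw [h])
  have hbc : b ≠ c := fun h => hbc (by rw [h])
  rcases lt_or_gt_of_ne hab with h1 | h1 <;> rcases lt_or_gt_of_ne hac with h2 | h2 <;>
    rcases lt_or_gt_of_ne hbc with h3 | h3
  · exact key a b c ha hc hb2 h1 h3
  · exact key a c b ha hb hc2 h2 h3
  · omega
  · exact key c a b hc hb ha2 h2 h1
  · exact key b a c hb hc ha2 h1 h2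
  · omega
  · exact key b c a hb ha hc2 h3 h2
  · exact key c b a hc ha hb2 h3 h1

/-- The extent of a lattice row. -/
lemma row_extent {L : Finset (ℤ × ℤ)} {y : ℤ} (hne : (L.filter (fun z => z.2 = y)).Nonempty) :
    ∃ x1 x2 : ℤ, (x1, y) ∈ L ∧ (x2, y) ∈ L ∧
      ((L.filter (fun z => z.2 = y)).card : ℤ) ≤ x2 - x1 + 1 := by
  obtain ⟨⟨a, a'⟩, ha, hamin⟩ := Finset.exists_min_image _ (fun z : ℤ × ℤ => z.1) hne
  obtain ⟨⟨b, b'⟩, hb, hbmax⟩ := Finset.exists_max_image _ (fun z : ℤ × ℤ => z.1) hne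
  have hab := hamin _ hb
  simp only [Finset.mem_filter] at ha hb
  obtain ⟨ha, rfl⟩ := ha
  obtain ⟨hb, rfl⟩ := hb
  refine ⟨a, b, ha, hb, ?_⟩
  have hsub : L.filter (fun z => z.2 = b') ⊆ (Finset.Icc a b).image (fun x => (x, b')) := by
    intro z hz
    have h1 := hamin z hz
    have h2 := hbmax z hz
    simp only [Finset.mem_filter] at hz
    simp only [Finset.mem_image, Finset.mem_Icc]
    exact ⟨z.1, ⟨h1, h2⟩, by rw [← hz.2]⟩
  have hcard := (Finset.card_le_card hsub).trans Finset.card_image_le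
  rw [Int.card_Icc] at hcard
  simp only at hab
  omega

lemma sum_lam (r : ℕ) (q q' : ℝ) :
    ∑ j ∈ Finset.range r, ((1 - ((j : ℝ) + 1) / (r + 1)) * q' + ((j : ℝ) + 1) / (r + 1) * q)
      = r * (q + q') / 2 := by
  have h : ∀ n : ℕ, ∑ j ∈ Finset.range n, ((1 - ((j : ℝ) + 1) / (r + 1)) * q'
      + ((j : ℝ) + 1) / (r + 1) * q)
      = n * q' + (n * (n + 1) / 2) / (r + 1) * (q - q') := by
    intro n
    induction n with
    | zero => simp
    | succ n ih =>
      rw [Finset.sum_range_succ, ih]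
      push_cast
      field_simp
      ring
  rw [h]
  field_simp
  ring

/-- Row-by-row estimate. -/
lemma rows {P : Set (ℝ × ℝ)} {L I : Finset (ℤ × ℤ)} (D : LData P L I)
    (c : ℤ) (r : ℕ) (hr : 1 ≤ r) (hL : ∀ z ∈ L, c ≤ z.2 ∧ z.2 ≤ c + r + 1)
    {zb zt : ℤ × ℤ} (hb : zb ∈ L) (ht : zt ∈ L) (hb2 : zb.2 = c) (ht2 : zt.2 = c + r + 1) :
    (L \ I).card ≤ 2 * I.card + 6 ∨
      ((L \ I).card ≤ 2 * r + 5 ∧ (L.filter (fun z => z.2 = c)).card +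
        (L.filter (fun z => z.2 = c + r + 1)).card ≤ 5) := by
  obtain ⟨a1, a2, ha1, ha2, ha⟩ := row_extent (L := L) (y := c) ⟨zb, by simp [hb, hb2]⟩
  obtain ⟨b1, b2, hb1, hb2', hb'⟩ := row_extent (L := L) (y := c + r + 1) ⟨zt, by simp [ht, ht2]⟩
  set nc := (L.filter (fun z => z.2 = c)).card with hnc
  set nd := (L.filter (fun z => z.2 = c + r + 1)).card with hnd
  rw [D.memL] at ha1 ha2 hb1 hb2'
  simp only [toR2] at ha1 ha2 hb1 hb2'
  have hrow : ∀ j : ℕ, j < r → ((L \ I).filter (fun z => z.2 = c + 1 + j)).card ≤ 2 ∧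
      ((1 - ((j : ℝ) + 1) / (r + 1)) * ((nc : ℝ) - 1) + ((j : ℝ) + 1) / (r + 1) * ((nd : ℝ) - 1))
        ≤ ((I.filter (fun z => z.2 = c + 1 + j)).card : ℝ) + 1 := by
    intro j hj
    have hj' : (j : ℝ) < r := by exact_mod_cast hj
    have hj0 : (0 : ℝ) ≤ j := by positivity
    have hyu : ((c + 1 + j : ℤ) : ℝ) < ((c + r + 1 : ℤ) : ℝ) := by push_cast; linarith
    have hyd : (c : ℝ) < ((c + 1 + j : ℤ) : ℝ) := by push_cast; linarith
    refine ⟨row_bdry D hb1 ha1 hyu hyd, ?_⟩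
    set t : ℝ := ((j : ℝ) + 1) / (r + 1) with htdef
    have ht0 : 0 ≤ t := by positivity
    have ht1 : t ≤ 1 := by rw [htdef, div_le_one (by positivity)]; linarith
    have hte : t * (r + 1) = j + 1 := by rw [htdef]; field_simp
    have e1 : ((1 - t) * a1 + t * b1, ((c + 1 + j : ℤ) : ℝ)) ∈ P := by
      refine row_combo D.conv t ht0 ht1 ha1 hb1 rfl ?_
      push_cast; linear_combination -hte
    have e2 : ((1 - t) * a2 + t * b2, ((c + 1 + j : ℤ) : ℝ)) ∈ P := by
      refine row_combo D.conv t ht0 ht1 ha2 hb2' rfl ?_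
      push_cast; linear_combination -hte
    have := row_count D e1 e2 hb1 ha1 hyu hyd
    have f1 : (nc : ℝ) ≤ a2 - a1 + 1 := by exact_mod_cast ha
    have f2 : (nd : ℝ) ≤ b2 - b1 + 1 := by exact_mod_cast hb'
    have g1 := mul_le_mul_of_nonneg_left f1 (sub_nonneg.2 ht1)
    have g2 := mul_le_mul_of_nonneg_left f2 ht0
    linarith
  -- decomposition of b
  have hbsum : (L \ I).card ≤ nc + nd + 2 * r := by
    have hsub : (L \ I) ⊆ (L.filter (fun z => z.2 = c) ∪ L.filter (fun z => z.2 = c + r + 1)) ∪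
        (Finset.range r).biUnion (fun j => (L \ I).filter (fun z => z.2 = c + 1 + j)) := by
      intro z hz
      have hzL := (Finset.mem_sdiff.1 hz).1
      have := hL z hzL
      simp only [Finset.mem_union, Finset.mem_filter, Finset.mem_biUnion, Finset.mem_range]
      by_cases h1 : z.2 = c
      · exact Or.inl (Or.inl ⟨hzL, h1⟩)
      by_cases h2 : z.2 = c + r + 1
      · exact Or.inl (Or.inr ⟨hzL, h2⟩)
      · exact Or.inr ⟨(z.2 - c - 1).toNat, by omega, hz, by omega⟩
    have h1 := (Finset.card_le_card hsub).trans (Finset.card_union_le _ _)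
    have h2 := Finset.card_union_le (L.filter (fun z => z.2 = c))
      (L.filter (fun z => z.2 = c + r + 1))
    have h3 : ((Finset.range r).biUnion
        (fun j => (L \ I).filter (fun z => z.2 = c + 1 + j))).card ≤ r * 2 := by
      have := Finset.card_biUnion_le_card_mul (Finset.range r)
        (fun j => (L \ I).filter (fun z => z.2 = c + 1 + j)) 2
        (fun j hj => (hrow j (Finset.mem_range.1 hj)).1)
      simpa using this
    omega
  have hisum : ∑ j ∈ Finset.range r, (I.filter (fun z => z.2 = c + 1 + j)).card ≤ I.card := by
    rw [← Finset.card_biUnion]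
    · apply Finset.card_le_card
      intro z hz
      simp only [Finset.mem_biUnion, Finset.mem_filter] at hz
      obtain ⟨_, _, h, _⟩ := hz
      exact h
    · intro i _ j _ hij
      simp only [Function.onFun]
      rw [Finset.disjoint_left]
      intro z hz hz'
      simp only [Finset.mem_filter] at hz hz'
      omega
  by_cases hs : nc + nd ≤ 5
  · right
    exact ⟨by omega, hs⟩
  · left
    have hsR : (6 : ℝ) ≤ nc + nd := by
      have : 6 ≤ nc + nd := by omega
      exact_mod_cast this
    have hrR : (1 : ℝ) ≤ r := by exact_mod_cast hr
    have h1 : ∑ j ∈ Finset.range r, ((1 - ((j : ℝ) + 1) / (r + 1)) * ((nc : ℝ) - 1)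
        + ((j : ℝ) + 1) / (r + 1) * ((nd : ℝ) - 1)) ≤
        ∑ j ∈ Finset.range r, (((I.filter (fun z => z.2 = c + 1 + j)).card : ℝ) + 1) :=
      Finset.sum_le_sum fun j hj => (hrow j (Finset.mem_range.1 hj)).2
    rw [sum_lam, Finset.sum_add_distrib] at h1
    simp only [Finset.sum_const, Finset.card_range, nsmul_eq_mul, mul_one] at h1
    have h2 : ∑ j ∈ Finset.range r, ((I.filter (fun z => z.2 = c + 1 + j)).card : ℝ) ≤ I.card := by
      exact_mod_cast hisum
    have h3 : ((L \ I).card : ℝ) ≤ nc + nd + 2 * r := by exact_mod_cast hbsum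
    have h4 : ((L \ I).card : ℝ) ≤ 2 * I.card + 6 := by nlinarith
    exact_mod_cast h4

/-- Unimodular coordinate change. -/
lemma transfer {P : Set (ℝ × ℝ)} (hP : LP P) (u v d1 d2 : ℤ) (h : u * d1 + v * d2 = 1)
    (a : ℤ × ℤ) : ∃ Q, LP Q ∧ icount Q = icount P ∧ bcount Q = bcount P ∧
      (∀ x y : ℤ, (toR2 (x, y) ∈ Q ↔ toR2 (a.1 + d1 * x - v * y, a.2 + d2 * x + u * y) ∈ P)) ∧
      (∀ x y : ℤ, (toR2 (x, y) ∈ interior Q ↔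
        toR2 (a.1 + d1 * x - v * y, a.2 + d2 * x + u * y) ∈ interior P)) := by
  have hR : (u : ℝ) * d1 + v * d2 = 1 := by exact_mod_cast h
  let A : (ℝ × ℝ) →ᵃ[ℝ] (ℝ × ℝ) :=
    { toFun := fun p => (u * (p.1 - a.1) + v * (p.2 - a.2), -d2 * (p.1 - a.1) + d1 * (p.2 - a.2))
      linear :=
        { toFun := fun p => (u * p.1 + v * p.2, -d2 * p.1 + d1 * p.2)
          map_add' := by intro p q; ext <;> simp <;> ring
          map_smul' := by intro p q; ext <;> simp <;> ring }
      map_vadd' := by intro p q; ext <;> simp <;> ring }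
  let F : (ℝ × ℝ) ≃ₜ (ℝ × ℝ) :=
    { toFun := fun p => (a.1 + d1 * p.1 - v * p.2, a.2 + d2 * p.1 + u * p.2)
      invFun := A
      left_inv := by
        intro p
        ext
        · simp only [A, AffineMap.coe_mk]; linear_combination p.1 * hR
        · simp only [A, AffineMap.coe_mk]; linear_combination p.2 * hR
      right_inv := by
        intro p
        ext
        · simp only [A, AffineMap.coe_mk]; linear_combination (p.1 - a.1) * hR
        · simp only [A, AffineMap.coe_mk]; linear_combination (p.2 - a.2) * hR
      continuous_toFun := by fun_prop
      continuous_invFun := by simp only [A, AffineMap.coe_mk]; fun_prop }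
  let G : (ℤ × ℤ) ≃ (ℤ × ℤ) :=
    { toFun := fun p => (a.1 + d1 * p.1 - v * p.2, a.2 + d2 * p.1 + u * p.2)
      invFun := fun p => (u * (p.1 - a.1) + v * (p.2 - a.2), -d2 * (p.1 - a.1) + d1 * (p.2 - a.2))
      left_inv := by
        intro p
        ext
        · simp only; linear_combination p.1 * h
        · simp only; linear_combination p.2 * h
      right_inv := by
        intro p
        ext
        · simp only; linear_combination (p.1 - a.1) * h
        · simp only; linear_combination (p.2 - a.2) * h }
  have hFG : ∀ z, F (toR2 z) = toR2 (G z) := by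
    intro z
    simp only [F, G, toR2]
    simp
  have hcount : ∀ X : Set (ℝ × ℝ), {z : ℤ × ℤ | toR2 z ∈ F ⁻¹' X}.ncard
      = {z : ℤ × ℤ | toR2 z ∈ X}.ncard := by
    intro X
    rw [← Set.ncard_image_of_injective {z : ℤ × ℤ | toR2 z ∈ F ⁻¹' X} G.injective]
    congr 1
    ext z
    constructor
    · rintro ⟨w, hw, rfl⟩
      have : F (toR2 w) ∈ X := hw
      rw [hFG] at this
      exact this
    · intro hz
      refine ⟨G.symm z, ?_, by simp⟩
      change F (toR2 (G.symm z)) ∈ X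
      rw [hFG]
      simpa using hz
  refine ⟨F ⁻¹' P, ?_, ?_, ?_, ?_, ?_⟩
  · obtain ⟨S, rfl⟩ := hP
    refine ⟨S.map G.symm.toEmbedding, ?_⟩
    have h1 : F ⁻¹' (convexHull ℝ (toR2 '' (S : Set (ℤ × ℤ)))) =
        A '' (convexHull ℝ (toR2 '' (S : Set (ℤ × ℤ)))) :=
      (F.toEquiv.image_symm_eq_preimage _).symm
    rw [h1, AffineMap.image_convexHull, Set.image_image]
    congr 1
    simp only [Finset.coe_map, Set.image_image]
    apply Set.image_congr
    intro z _
    simp only [A, G, toR2]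
    simp
  · rw [icount, ← F.preimage_interior, hcount]; rfl
  · rw [bcount, ← F.preimage_frontier, hcount]; rfl
  · intro x y
    change F _ ∈ P ↔ _
    rw [hFG]
    rfl
  · intro x y
    rw [← F.preimage_interior]
    change F _ ∈ interior P ↔ _
    rw [hFG]
    rfl

lemma exists_extreme (T : Finset (ℤ × ℤ)) (hne : T.Nonempty)
    (hT : ∀ z ∈ T, 0 < z.1 ∨ (z.1 = 0 ∧ 0 < z.2)) :
    ∃ c ∈ T, ∀ z ∈ T, c.1 * z.2 - c.2 * z.1 ≤ 0 := by
  induction hne using Finset.Nonempty.cons_induction with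
  | singleton a => exact ⟨a, by simp, by simp [mul_comm]⟩
  | cons w s hw hs ih =>
    obtain ⟨c, hc, hcz⟩ := ih (fun z hz => hT z (by simp [hz]))
    by_cases h : c.1 * w.2 - c.2 * w.1 ≤ 0
    · refine ⟨c, by simp [hc], ?_⟩
      intro z hz
      rcases Finset.mem_cons.1 hz with rfl | hz
      · exact h
      · exact hcz z hz
    · refine ⟨w, by simp, ?_⟩
      intro z hz
      rcases Finset.mem_cons.1 hz with rfl | hz
      · exact le_of_eq (by ring)
      · have h1 := hcz z hz
        have hwx : 0 ≤ w.1 := by rcases hT w (by simp) with h | h <;> omega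
        have hzx : 0 ≤ z.1 := by rcases hT z (by simp [hz]) with h | h <;> omega
        rcases hT c (by simp [hc]) with h2 | h2
        · by_contra! h3
          have e : c.1 * (w.1 * z.2 - w.2 * z.1) =
            w.1 * (c.1 * z.2 - c.2 * z.1) - z.1 * (c.1 * w.2 - c.2 * w.1) := by ring
          have := mul_pos h2 h3
          have := mul_nonneg hzx (le_of_lt (not_le.1 h))
          nlinarith
        · exfalso
          rw [h2.1] at h
          nlinarith

lemma hull_le {L : Finset (ℤ × ℤ)} {M : ℝ} (h : ∀ z ∈ L, (z.2 : ℝ) ≤ M) {q : ℝ × ℝ}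
    (hq : q ∈ convexHull ℝ (toR2 '' (L : Set (ℤ × ℤ)))) : q.2 ≤ M := by
  have hc : Convex ℝ {p : ℝ × ℝ | p.2 ≤ M} := convex_halfSpace_le ⟨by simp, by simp⟩ M
  refine convexHull_min ?_ hc hq
  rintro _ ⟨z, hz, rfl⟩
  exact h z hz

lemma hull_ge {L : Finset (ℤ × ℤ)} {M : ℝ} (h : ∀ z ∈ L, M ≤ (z.2 : ℝ)) {q : ℝ × ℝ}
    (hq : q ∈ convexHull ℝ (toR2 '' (L : Set (ℤ × ℤ)))) : M ≤ q.2 := by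
  have hc : Convex ℝ {p : ℝ × ℝ | M ≤ p.2} := convex_halfSpace_ge ⟨by simp, by simp⟩ M
  refine convexHull_min ?_ hc hq
  rintro _ ⟨z, hz, rfl⟩
  exact h z hz

lemma exists_above {P : Set (ℝ × ℝ)} {L I : Finset (ℤ × ℤ)} (D : LData P L I) {z : ℤ × ℤ}
    (hz : z ∈ I) : ∃ w ∈ L, z.2 < w.2 := by
  by_contra! h
  obtain ⟨q, hq, hlt⟩ := (interior_strict ((D.memI z).1 hz)).1
  rw [D.hull] at hq
  have := hull_le (M := (z.2 : ℝ)) (fun w hw => by exact_mod_cast h w hw) hq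
  simp only [toR2] at hlt
  linarith

lemma exists_below {P : Set (ℝ × ℝ)} {L I : Finset (ℤ × ℤ)} (D : LData P L I) {z : ℤ × ℤ}
    (hz : z ∈ I) : ∃ w ∈ L, w.2 < z.2 := by
  by_contra! h
  obtain ⟨q, hq, hlt⟩ := (interior_strict ((D.memI z).1 hz)).2
  rw [D.hull] at hq
  have := hull_ge (M := (z.2 : ℝ)) (fun w hw => by exact_mod_cast h w hw) hq
  simp only [toR2] at hlt
  linarith

lemma LData.sub {P : Set (ℝ × ℝ)} {L I : Finset (ℤ × ℤ)} (D : LData P L I) : I ⊆ L := by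
  intro z hz
  rw [D.memL]
  exact interior_subset ((D.memI z).1 hz)

/-- A window of `h` consecutive integers contains a multiple of `h`. -/
lemma window (x h : ℤ) (hh : 1 ≤ h) : ∃ m : ℤ, x ≤ h * m ∧ h * m ≤ x + h - 1 := by
  refine ⟨(x + h - 1) / h, ?_, Int.mul_ediv_self_le (by omega)⟩
  have := Int.lt_mul_ediv_self_add (x := x + h - 1) (k := h) (by omega)
  omega

/-- A triangle with unit lattice base and apex `(x,h)` has a lattice point in row one. -/
lemma row_one {P : Set (ℝ × ℝ)} {L I : Finset (ℤ × ℤ)} (D : LData P L I)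
    (h0 : (0, 0) ∈ I) (h1 : (1, 0) ∈ I) (htop : ∀ z ∈ I, z.2 ≤ 0) {x h : ℤ} (hz : (x, h) ∈ L) :
    h ≤ 1 := by
  by_contra! hh
  obtain ⟨m, hm1, hm2⟩ := window x h (by omega)
  have hhR : (2 : ℝ) ≤ h := by exact_mod_cast hh
  have hm1R : (x : ℝ) ≤ h * m := by exact_mod_cast hm1
  have hm2R : (h : ℝ) * m ≤ x + h - 1 := by exact_mod_cast hm2
  rw [D.memI] at h0 h1
  rw [D.memL] at hz
  simp only [toR2] at h0 h1 hz
  have hs : (((h * m - x) / (h - 1) : ℝ), (0 : ℝ)) ∈ interior P := by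
    refine row_combo D.conv.interior ((h * m - x) / (h - 1) : ℝ) ?_ ?_ h0 h1 ?_ ?_
    · apply div_nonneg <;> linarith
    · rw [div_le_one] <;> linarith
    · simp
    · simp
  have : (m, 1) ∈ I := by
    rw [D.memI]
    refine row_combo_int D.conv (1 / h : ℝ) (by positivity) ?_ hs hz ?_ ?_
    · rw [div_lt_one] <;> linarith
    · have : (h : ℝ) - 1 ≠ 0 := by linarith
      field_simp
      ring
    · simp only; push_cast; field_simp; ring
  have := htop _ this
  simp at this

lemma step2 {P : Set (ℝ × ℝ)} {L I : Finset (ℤ × ℤ)} (D : LData P L I)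
    (h0 : (0, 0) ∈ I) (h1 : (1, 0) ∈ I) (htop : ∀ z ∈ I, z.2 ≤ 0)
    (IH : ∀ Q, LP Q → 1 ≤ icount Q → icount Q < I.card → bcount Q ≤ 2 * icount Q + 7) :
    (L \ I).card ≤ 2 * I.card + 6 := by
  have hL1 : ∀ z ∈ L, z.2 ≤ 1 := fun z hz => row_one D h0 h1 htop (x := z.1) (h := z.2) hz
  obtain ⟨zt, hzt, hzt2⟩ := exists_above D h0
  obtain ⟨zb', hzb', hzb2'⟩ := exists_below D h0
  simp only at hzt2 hzb2'
  have hzt1 := hL1 zt hzt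
  obtain ⟨⟨x, y⟩, hw, hwmin⟩ := Finset.exists_min_image L (fun z => z.2) ⟨zt, hzt⟩
  have hy : y < 0 := by
    have := hwmin _ hzb'
    simp only at this
    omega
  obtain ⟨h, rfl⟩ : ∃ h : ℕ, y = -h := ⟨(-y).toNat, by omega⟩
  have hh : 1 ≤ h := by omega
  rcases rows D (-h) h hh (fun z hz => ⟨hwmin z hz, by have := hL1 z hz; omega⟩) hw hzt rfl
    (by omega) with hfin | ⟨hb, hn⟩
  · exact hfin
  have hI2 : 2 ≤ (I.filter (fun z => z.2 = 0)).card := by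
    have : ({(0, 0), (1, 0)} : Finset (ℤ × ℤ)) ⊆ I.filter (fun z => z.2 = 0) := by
      intro z hz
      simp only [Finset.mem_insert, Finset.mem_singleton] at hz
      rcases hz with rfl | rfl <;> simp [h0, h1]
    exact (by decide : 2 ≤ ({(0, 0), (1, 0)} : Finset (ℤ × ℤ)).card).trans (Finset.card_le_card this)
  set Q := convexHull ℝ (toR2 '' ((L.filter (fun z => z.2 ≤ 0) : Finset (ℤ × ℤ)) : Set (ℤ × ℤ)))
    with hQ
  have hLPQ : LP Q := ⟨_, rfl⟩
  obtain ⟨L', I', D'⟩ := hLPQ.data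
  have hQP : Q ⊆ P := by
    apply convexHull_min _ D.conv
    rintro _ ⟨z, hz, rfl⟩
    simp only [Finset.coe_filter, Set.mem_ofPred_eq] at hz
    exact (D.memL z).1 hz.1
  have hQmem : ∀ z ∈ L, z.2 ≤ 0 → toR2 z ∈ Q := by
    intro z hz hz2
    exact subset_convexHull ℝ _ ⟨z, by simp [hz, hz2], rfl⟩
  have hL' : L' = L.filter (fun z => z.2 ≤ 0) := by
    ext z
    rw [D'.memL, Finset.mem_filter]
    constructor
    · intro hz
      refine ⟨(D.memL z).2 (hQP hz), ?_⟩
      have := hull_le (M := 0) (fun w hw => by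
        have := (Finset.mem_filter.1 hw).2
        exact_mod_cast this) hz
      simp only [toR2] at this
      exact_mod_cast this
    · rintro ⟨h1, h2⟩
      exact hQmem z h1 h2
  have hI'sub : I' ⊆ I.filter (fun z => ¬ z.2 = 0) := by
    intro z hz
    rw [Finset.mem_filter]
    refine ⟨(D.memI z).2 (interior_mono hQP ((D'.memI z).1 hz)), ?_⟩
    intro hz0
    obtain ⟨w, hw, hlt⟩ := exists_above D' hz
    rw [hL', Finset.mem_filter] at hw
    omega
  have hIcard := Finset.card_filter_add_card_filter_not (s := I) (fun z => z.2 = 0)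
  have hI'card := Finset.card_le_card hI'sub
  by_cases hI' : 1 ≤ I'.card
  · have ih := IH Q hLPQ (by rw [D'.ic]; exact hI') (by rw [D'.ic]; omega)
    rw [D'.ic, D'.bc] at ih
    have hLcard := Finset.card_filter_add_card_filter_not (s := L) (fun z => z.2 ≤ 0)
    have hrow1 : (L.filter (fun z => ¬ z.2 ≤ 0)).card ≤
        (L.filter (fun z => z.2 = -(h : ℤ) + h + 1)).card := by
      apply Finset.card_le_card
      intro z hz
      rw [Finset.mem_filter] at hz ⊢
      have := hL1 z hz.1
      exact ⟨hz.1, by omega⟩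
    have e1 := Finset.card_sdiff_add_card_eq_card D.sub
    have e2 := Finset.card_sdiff_add_card_eq_card D'.sub
    rw [hL'] at e2 ih
    omega
  · have hI'0 : I' = ∅ := by
      rw [← Finset.card_eq_zero]; omega
    suffices hcol : h ≤ I.card by omega
    have hcolumn : ∀ s k : ℤ, (s, 0) ∈ I → x = s + h * k → h ≤ I.card := by
      intro s k hs hx
      have hsub : (Finset.range h).image (fun j : ℕ => ((s + j * k, -(j : ℤ)) : ℤ × ℤ)) ⊆ I := by
        intro z hz
        simp only [Finset.mem_image, Finset.mem_range] at hz
        obtain ⟨j, hj, rfl⟩ := hz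
        rw [D.memI] at hs ⊢
        have hw' := (D.memL _).1 hw
        simp only [toR2] at hs hw' ⊢
        have hjR : (j : ℝ) < h := by exact_mod_cast hj
        have hhR : (0 : ℝ) < h := by exact_mod_cast hh
        refine row_combo_int D.conv (j / h : ℝ) (by positivity) ?_ hs hw' ?_ ?_
        · rw [div_lt_one hhR]; exact hjR
        · rw [hx]; push_cast; field_simp; ring
        · push_cast; field_simp; ring
      have := Finset.card_le_card hsub
      rw [Finset.card_image_of_injective _ (by
        intro a b hab
        simp only [Prod.mk.injEq] at hab
        omega)] at this
      simpa using this
    obtain ⟨m, hm1, hm2⟩ := window x h (by omega)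
    by_cases c1 : (h : ℤ) * m = x
    · exact hcolumn 0 m h0 (by omega)
    by_cases c2 : (h : ℤ) * m = x + h - 1
    · exact hcolumn 1 (m - 1) h1 (by rw [mul_sub]; omega)
    exfalso
    have hh2 : 2 ≤ h := by
      by_contra! hlt
      have : h = 1 := by omega
      subst this
      simp at c1 hm1 hm2
      omega
    have : (m, -1) ∈ I' := by
      rw [D'.memI]
      have q0 := hQmem _ (D.sub h0) le_rfl
      have q1 := hQmem _ (D.sub h1) le_rfl
      have q2 := hQmem _ hw hy.le
      simp only [toR2] at q0 q1 q2 ⊢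
      have hhR : (2 : ℝ) ≤ h := by exact_mod_cast hh2
      have ht1 : (1 / h : ℝ) ≤ 1 := by rw [div_le_one] <;> linarith
      have r1 : ((x / h : ℝ), (-1 : ℝ)) ∈ Q :=
        row_combo D'.conv (1 / h : ℝ) (by positivity) ht1 q0 q2 (by push_cast; field_simp; ring)
          (by push_cast; field_simp; ring)
      have r2 : (((x + h - 1) / h : ℝ), (-1 : ℝ)) ∈ Q :=
        row_combo D'.conv (1 / h : ℝ) (by positivity) ht1 q1 q2 (by push_cast; field_simp; ring)
          (by push_cast; field_simp; ring)
      have k1 : (x : ℝ) < h * m := by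
        have : x < h * m := by omega
        exact_mod_cast this
      have k2 : (h : ℝ) * m < x + h - 1 := by
        have : h * m < x + h - 1 := by omega
        exact_mod_cast this
      push_cast
      refine mid_interior D'.conv r1 r2 q0 q2 ?_ ?_ ?_ ?_
      · rw [div_lt_iff₀ (by linarith)]; linarith
      · rw [lt_div_iff₀ (by linarith)]; linarith
      · push_cast; norm_num
      · push_cast; linarith
    rw [hI'0] at this
    simp at this

/-- In a row with extent more than one there is an interior lattice point. -/
lemma fat_row {P : Set (ℝ × ℝ)} {L I : Finset (ℤ × ℤ)} (D : LData P L I)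
    {a1 a2 b1 b2 y1 y2 y : ℤ} (ha1 : (a1, y1) ∈ L) (ha2 : (a2, y1) ∈ L) (hb1 : (b1, y2) ∈ L)
    (hb2 : (b2, y2) ∈ L) (hy1 : y < y1) (hy2 : y2 < y)
    (hlen : y1 - y2 < (y - y2) * (a2 - a1) + (y1 - y) * (b2 - b1)) : ∃ x, (x, y) ∈ I := by
  rw [D.memL] at ha1 ha2 hb1 hb2
  simp only [toR2] at ha1 ha2 hb1 hb2
  have y1R : (y : ℝ) < y1 := by exact_mod_cast hy1
  have y2R : (y2 : ℝ) < y := by exact_mod_cast hy2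
  have lenR : (y1 - y2 : ℝ) < (y - y2) * (a2 - a1) + (y1 - y) * (b2 - b1) := by exact_mod_cast hlen
  have hpos : (0 : ℝ) < y1 - y2 := by linarith
  set t : ℝ := (y1 - y) / (y1 - y2) with ht
  have ht0 : 0 ≤ t := div_nonneg (by linarith) hpos.le
  have ht1 : t ≤ 1 := by rw [ht, div_le_one hpos]; linarith
  have hte : t * (y1 - y2) = y1 - y := by rw [ht]; field_simp
  have e1 : ((1 - t) * a1 + t * b1, (y : ℝ)) ∈ P :=
    row_combo D.conv t ht0 ht1 ha1 hb1 rfl (by linear_combination hte)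
  have e2 : ((1 - t) * a2 + t * b2, (y : ℝ)) ∈ P :=
    row_combo D.conv t ht0 ht1 ha2 hb2 rfl (by linear_combination hte)
  have hcnt := row_count D e1 e2 ha1 hb1 y1R y2R
  have hgt : 1 < ((1 - t) * a2 + t * b2) - ((1 - t) * a1 + t * b1) := by
    have : (y1 - y2 : ℝ) * 1 < (y1 - y2) * (((1 - t) * a2 + t * b2) - ((1 - t) * a1 + t * b1)) := by
      have : (y1 - y2 : ℝ) * (((1 - t) * a2 + t * b2) - ((1 - t) * a1 + t * b1)) =
        (y - y2) * (a2 - a1) + (y1 - y) * (b2 - b1) := by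
        linear_combination (-(a2 : ℝ) + b2 + a1 - b1) * hte
      rw [this]; linarith
    exact lt_of_mul_lt_mul_left this hpos.le
  have hc : (0 : ℝ) < ((I.filter (fun z => z.2 = y)).card : ℝ) := by linarith
  have hc' : 0 < (I.filter (fun z => z.2 = y)).card := by exact_mod_cast hc
  obtain ⟨z, hz⟩ := Finset.card_pos.1 hc'
  rw [Finset.mem_filter] at hz
  exact ⟨z.1, by rw [← hz.2]; exact hz.1⟩

lemma row_card_le {P : Set (ℝ × ℝ)} {L I : Finset (ℤ × ℤ)} (_ : LData P L I) {y : ℤ} (n : ℕ)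
    (h : ∀ x1 x2 : ℤ, (x1, y) ∈ L → (x2, y) ∈ L → x2 - x1 < n) :
    (L.filter (fun z => z.2 = y)).card ≤ n := by
  rcases (L.filter (fun z => z.2 = y)).eq_empty_or_nonempty with h1 | h1
  · rw [h1]; simp
  · obtain ⟨x1, x2, hx1, hx2, hc⟩ := row_extent h1
    have := h x1 x2 hx1 hx2
    omega

lemma step1 {P : Set (ℝ × ℝ)} {L I : Finset (ℤ × ℤ)} (D : LData P L I)
    (h0 : (0, 0) ∈ L) (h1 : (1, 0) ∈ L) (h2 : (-1, 0) ∈ L) (htop : ∀ z ∈ L, z.2 ≤ 0)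
    (hI : I.card = 1) : (L \ I).card ≤ 9 := by
  obtain ⟨⟨o1, o2⟩, rfl⟩ := Finset.card_eq_one.1 hI
  have ho : (o1, o2) ∈ ({(o1, o2)} : Finset (ℤ × ℤ)) := by simp
  obtain ⟨za, hza, hza2⟩ := exists_above D ho
  obtain ⟨zb', hzb', hzb2'⟩ := exists_below D ho
  have := htop za hza
  simp only at hza2 hzb2'
  have ho2 : o2 = -1 := by
    by_contra hne
    obtain ⟨t, rfl⟩ : ∃ t : ℤ, o2 = -t := ⟨-o2, by ring⟩
    have ht : 2 ≤ t := by omega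
    obtain ⟨m, hm1, hm2⟩ := window o1 t (by omega)
    have htR : (2 : ℝ) ≤ t := by exact_mod_cast ht
    have hm1R : (o1 : ℝ) ≤ t * m := by exact_mod_cast hm1
    have hm2R : (t : ℝ) * m ≤ o1 + t - 1 := by exact_mod_cast hm2
    rw [D.memL] at h0 h1
    have hoI := (D.memI _).1 ho
    simp only [toR2] at h0 h1 hoI
    have hs : (((t * m - o1) / (t - 1) : ℝ), (0 : ℝ)) ∈ P := by
      refine row_combo D.conv ((t * m - o1) / (t - 1) : ℝ) ?_ ?_ h0 h1 ?_ ?_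
      · apply div_nonneg <;> linarith
      · rw [div_le_one] <;> linarith
      · simp
      · simp
    have hmem : (m, -1) ∈ ({(o1, -t)} : Finset (ℤ × ℤ)) := by
      rw [D.memI]
      have hinv : (0 : ℝ) < 1 / t := by positivity
      have hinv1 : (1 / t : ℝ) ≤ 1 := by rw [div_le_one] <;> linarith
      refine row_combo_int D.conv (1 - 1 / t : ℝ) (by linarith) (by linarith) hoI hs ?_ ?_
      · have : (t : ℝ) - 1 ≠ 0 := by linarith
        field_simp
        ring
      · simp only; push_cast; field_simp; ring
    simp only [Finset.mem_singleton, Prod.mk.injEq] at hmem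
    omega
  subst ho2
  obtain ⟨⟨x, y⟩, hw, hwmin⟩ := Finset.exists_min_image L (fun z => z.2) ⟨_, h0⟩
  have hy : y < -1 := by
    have := hwmin _ hzb'
    simp only at this
    omega
  obtain ⟨r, rfl⟩ : ∃ r : ℕ, y = -r - 1 := ⟨(-y - 1).toNat, by omega⟩
  have hr : 1 ≤ r := by omega
  have hno : ∀ x, (x, -2) ∉ ({(o1, -1)} : Finset (ℤ × ℤ)) := by
    intro x hx
    simp at hx
  rcases rows D (-r - 1) r hr (fun z hz => ⟨hwmin z hz, by have := htop z hz; omega⟩) hw h0 rfl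
    (by simp only; omega) with hfin | ⟨hb, hn⟩
  · simp only [Finset.card_singleton] at hfin
    omega
  by_cases hr2 : r ≤ 2
  · omega
  by_cases hr4 : 4 ≤ r
  · exfalso
    obtain ⟨x', hx'⟩ := fat_row D (y := -2) h2 h1 hw hw (by omega) (by omega) (by ring_nf; omega)
    exact hno _ hx'
  have hr3 : r = 3 := by omega
  subst hr3
  norm_num at hw hwmin
  have n0 : (L.filter (fun z => z.2 = 0)).card ≤ 3 := by
    apply row_card_le D
    intro x1 x2 hx1 hx2
    by_contra! hlt
    push_cast at hlt
    obtain ⟨x', hx'⟩ := fat_row D (y := -2) hx1 hx2 hw hw (by omega) (by omega) (by ring_nf; omega)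
    exact hno _ hx'
  have n3 : (L.filter (fun z => z.2 = -3)).card ≤ 1 := by
    apply row_card_le D
    intro x1 x2 hx1 hx2
    by_contra! hlt
    push_cast at hlt
    obtain ⟨x', hx'⟩ := fat_row D (y := -2) h2 h1 hx1 hx2 (by omega) (by omega) (by ring_nf; omega)
    exact hno _ hx'
  have n4 : (L.filter (fun z => z.2 = -4)).card ≤ 1 := by
    apply row_card_le D
    intro x1 x2 hx1 hx2
    by_contra! hlt
    push_cast at hlt
    obtain ⟨x', hx'⟩ := fat_row D (y := -2) h2 h1 hx1 hx2 (by omega) (by omega) (by ring_nf; omega)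
    exact hno _ hx'
  have p0 := (D.memL _).1 h0
  have p4 := (D.memL _).1 hw
  have n1 := row_bdry D (y := -1) p0 p4 (by simp [toR2]) (by norm_num [toR2])
  have n2 := row_bdry D (y := -2) p0 p4 (by simp [toR2]) (by norm_num [toR2])
  set B := L \ {(o1, -1)} with hB
  have hsub : B ⊆ ((L.filter (fun z => z.2 = 0) ∪ L.filter (fun z => z.2 = -3)) ∪
      (L.filter (fun z => z.2 = -4) ∪ B.filter (fun z => z.2 = -1))) ∪
      B.filter (fun z => z.2 = -2) := by
    intro z hz
    have hzL : z ∈ L := (Finset.mem_sdiff.1 hz).1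
    have e1 := htop z hzL
    have e2 := hwmin z.1 z.2 hzL
    simp only [Finset.mem_union, Finset.mem_filter, hz, hzL, true_and]
    omega
  have c1 := Finset.card_le_card hsub
  have c2 := Finset.card_union_le ((L.filter (fun z => z.2 = 0) ∪ L.filter (fun z => z.2 = -3)) ∪
      (L.filter (fun z => z.2 = -4) ∪ B.filter (fun z => z.2 = -1))) (B.filter (fun z => z.2 = -2))
  have c3 := Finset.card_union_le (L.filter (fun z => z.2 = 0) ∪ L.filter (fun z => z.2 = -3))
      (L.filter (fun z => z.2 = -4) ∪ B.filter (fun z => z.2 = -1))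
  have c4 := Finset.card_union_le (L.filter (fun z => z.2 = 0)) (L.filter (fun z => z.2 = -3))
  have c5 := Finset.card_union_le (L.filter (fun z => z.2 = -4)) (B.filter (fun z => z.2 = -1))
  omega

lemma primitive (c : ℤ × ℤ) (hc : c ≠ 0) : ∃ g d1 d2 u v : ℤ, 0 < g ∧ c.1 = g * d1 ∧
    c.2 = g * d2 ∧ u * d1 + v * d2 = 1 := by
  have hg : 0 < (Int.gcd c.1 c.2 : ℤ) := by
    have : Int.gcd c.1 c.2 ≠ 0 := by
      intro h
      rw [Int.gcd_eq_zero_iff] at h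
      exact hc (Prod.ext h.1 h.2)
    omega
  obtain ⟨d1, hd1⟩ := Int.gcd_dvd_left c.1 c.2
  obtain ⟨d2, hd2⟩ := Int.gcd_dvd_right c.1 c.2
  refine ⟨_, d1, d2, Int.gcdA c.1 c.2, Int.gcdB c.1 c.2, hg, hd1, hd2, ?_⟩
  have := Int.gcd_eq_gcd_ab c.1 c.2
  have e : (Int.gcd c.1 c.2 : ℤ) * (Int.gcdA c.1 c.2 * d1 + Int.gcdB c.1 c.2 * d2)
      = (Int.gcd c.1 c.2 : ℤ) * 1 := by
    linear_combination (-1 : ℤ) * this - Int.gcdA c.1 c.2 * hd1 - Int.gcdB c.1 c.2 * hd2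
  exact mul_left_cancel₀ hg.ne' e

lemma case_many {P : Set (ℝ × ℝ)} (hP : LP P) (hi : 2 ≤ icount P)
    (IH : ∀ Q, LP Q → 1 ≤ icount Q → icount Q < icount P → bcount Q ≤ 2 * icount Q + 7) :
    bcount P ≤ 2 * icount P + 6 := by
  obtain ⟨L, I, D⟩ := hP.data
  rw [D.ic] at hi
  have hne : I.Nonempty := Finset.card_pos.1 (by omega)
  -- lexicographic minimum
  obtain ⟨a, ha, hamin⟩ := Finset.exists_min_image I (fun z => toLex z) hne
  have hamin' : ∀ z ∈ I, z ≠ a → 0 < (z - a).1 ∨ ((z - a).1 = 0 ∧ 0 < (z - a).2) := by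
    intro z hz hza
    have := hamin z hz
    rw [Prod.Lex.toLex_le_toLex] at this
    rcases this with h | ⟨h, h'⟩
    · left; simp only [Prod.fst_sub]; omega
    · right
      have : z.2 ≠ a.2 := fun h2 => hza (Prod.ext h.symm h2)
      simp only [Prod.fst_sub, Prod.snd_sub]
      omega
  obtain ⟨b, hb, hba⟩ := Finset.exists_mem_ne (by omega : 1 < I.card) a
  obtain ⟨c, hcT, hcz⟩ := exists_extreme ((I.erase a).image (fun z => z - a))
    ⟨b - a, Finset.mem_image.2 ⟨b, Finset.mem_erase.2 ⟨hba, hb⟩, rfl⟩⟩ (by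
      intro z hz
      obtain ⟨w, hw, rfl⟩ := Finset.mem_image.1 hz
      rw [Finset.mem_erase] at hw
      exact hamin' w hw.2 hw.1)
  obtain ⟨e, he, rfl⟩ := Finset.mem_image.1 hcT
  rw [Finset.mem_erase] at he
  obtain ⟨g, d1, d2, u, v, hg, hd1, hd2, huv⟩ := primitive (e - a) (sub_ne_zero.2 he.1)
  simp only [Prod.fst_sub, Prod.snd_sub] at hd1 hd2
  obtain ⟨Q, hQ, hQi, hQb, hQL, hQI⟩ := transfer hP u v d1 d2 huv a
  obtain ⟨L', I', D'⟩ := hQ.data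
  rw [← hQi, ← hQb, D'.ic, D'.bc]
  have hgR : (1 : ℝ) ≤ g := by exact_mod_cast hg
  apply step2 D'
  · rw [D'.memI, hQI]
    have := (D.memI a).1 ha
    simpa using this
  · rw [D'.memI, hQI]
    have k1 := (D.memI a).1 ha
    have k2 := (D.memI e).1 he.2
    simp only [toR2] at k1 k2 ⊢
    have hd1R : (e.1 - a.1 : ℝ) = g * d1 := by exact_mod_cast hd1
    have hd2R : (e.2 - a.2 : ℝ) = g * d2 := by exact_mod_cast hd2
    refine row_combo D.conv.interior (1 / g : ℝ) (by positivity) ?_ k1 k2 ?_ ?_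
    · rw [div_le_one] <;> linarith
    · push_cast; field_simp; linear_combination -hd1R
    · push_cast; field_simp; linear_combination -hd2R
  · rintro ⟨x, y⟩ hz
    rw [D'.memI, hQI, ← D.memI] at hz
    simp only
    by_cases hza : (a.1 + d1 * x - v * y, a.2 + d2 * x + u * y) = a
    · rw [Prod.ext_iff] at hza
      simp only at hza
      have : y = 0 := by linear_combination (-y) * huv - d2 * hza.1 + d1 * hza.2
      omega
    · have := hcz _ (Finset.mem_image.2 ⟨_, Finset.mem_erase.2 ⟨hza, hz⟩, rfl⟩)
      simp only [Prod.fst_sub, Prod.snd_sub] at this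
      rw [hd1, hd2] at this
      have e : g * d1 * (a.2 + d2 * x + u * y - a.2) - g * d2 * (a.1 + d1 * x - v * y - a.1)
        = g * y := by linear_combination g * y * huv
      rw [e] at this
      by_contra! hy
      have := mul_pos hg hy
      omega
  · intro R hR h1 h2
    exact IH R hR h1 (by rw [← hQi, D'.ic]; exact h2)

lemma case_one {P : Set (ℝ × ℝ)} (hP : LP P) (hi : icount P = 1) : bcount P ≤ 9 := by
  obtain ⟨L, I, D⟩ := hP.data
  by_contra! hb
  rw [D.bc] at hb
  rw [D.ic] at hi
  obtain ⟨o, ho⟩ := Finset.card_eq_one.1 hi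
  have hne : (interior P).Nonempty := ⟨toR2 o, (D.memI o).1 (by simp [ho])⟩
  -- pigeonhole modulo two
  obtain ⟨k, _, hk⟩ := Finset.exists_lt_card_fiber_of_mul_lt_card_of_maps_to
    (s := L \ I) (t := (Finset.univ : Finset (ZMod 2 × ZMod 2)))
    (f := fun z => ((z.1 : ZMod 2), (z.2 : ZMod 2))) (n := 2) (fun _ _ => Finset.mem_univ _)
    (by
      have : (Finset.univ : Finset (ZMod 2 × ZMod 2)).card = 4 := by decide
      rw [this]; omega)
  obtain ⟨p, q, s, hp, hq, hs, hpq, hps, hqs⟩ := Finset.two_lt_card_iff.1 hk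
  simp only [Finset.mem_filter, Finset.mem_sdiff] at hp hq hs
  have hmid : ∀ z w : ℤ × ℤ, z ∈ L → w ∈ L → ((z.1 : ZMod 2), (z.2 : ZMod 2)) = k →
      ((w.1 : ZMod 2), (w.2 : ZMod 2)) = k →
      ∃ m ∈ L, z.1 + w.1 = 2 * m.1 ∧ z.2 + w.2 = 2 * m.2 := by
    intro z w hz hw hzk hwk
    have h := hzk.trans hwk.symm
    rw [Prod.ext_iff] at h
    simp only [ZMod.intCast_eq_intCast_iff_dvd_sub] at h
    obtain ⟨⟨i, hi⟩, ⟨j, hj⟩⟩ := h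
    push_cast at hi hj
    refine ⟨(z.1 + i, z.2 + j), ?_, by simp only; omega, by simp only; omega⟩
    rw [D.memL] at hz hw ⊢
    simp only [toR2] at hz hw ⊢
    have hiR : (w.1 - z.1 : ℝ) = 2 * i := by exact_mod_cast hi
    have hjR : (w.2 - z.2 : ℝ) = 2 * j := by exact_mod_cast hj
    refine row_combo D.conv (1 / 2) (by norm_num) (by norm_num) hz hw ?_ ?_
    · push_cast; linarith
    · push_cast; linarith
  have hex : ∃ z w m : ℤ × ℤ, z ∈ L ∧ w ∈ L ∧ m ∈ L ∧ m ∉ I ∧ z ≠ w ∧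
      z.1 + w.1 = 2 * m.1 ∧ z.2 + w.2 = 2 * m.2 := by
    obtain ⟨m, hm, hm1, hm2⟩ := hmid p q hp.1.1 hq.1.1 hp.2 hq.2
    obtain ⟨m', hm', hm1', hm2'⟩ := hmid p s hp.1.1 hs.1.1 hp.2 hs.2
    by_cases c : m ∈ I
    · by_cases c' : m' ∈ I
      · exfalso
        rw [ho, Finset.mem_singleton] at c c'
        subst c c'
        exact hqs (Prod.ext (by omega) (by omega))
      · exact ⟨p, s, m', hp.1.1, hs.1.1, hm', c', hps, hm1', hm2'⟩
    · exact ⟨p, q, m, hp.1.1, hq.1.1, hm, c, hpq, hm1, hm2⟩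
  obtain ⟨z, w, m, hz, hw, hm, hmI, hzw, e1, e2⟩ := hex
  obtain ⟨α, β, hab, hsup⟩ := supp D.conv hne (fun h => hmI ((D.memI m).2 h))
  have e1R : (z.1 + w.1 : ℝ) = 2 * m.1 := by exact_mod_cast e1
  have e2R : (z.2 + w.2 : ℝ) = 2 * m.2 := by exact_mod_cast e2
  have sz := hsup _ ((D.memL z).1 hz)
  have sw := hsup _ ((D.memL w).1 hw)
  simp only [toR2] at sz sw hsup
  have seq : α * (z.1 - m.1) + β * (z.2 - m.2) = 0 := by
    have : α * (z.1 + w.1 : ℝ) + β * (z.2 + w.2 : ℝ) = 2 * (α * m.1 + β * m.2) := by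
      rw [e1R, e2R]; ring
    linarith
  -- the core, for an oriented direction
  have core : ∀ z w : ℤ × ℤ, z ∈ L → w ∈ L → z ≠ m → (z.1 + w.1 : ℝ) = 2 * m.1 →
      (z.2 + w.2 : ℝ) = 2 * m.2 →
      (∀ y ∈ L, (z - m).1 * (y - m).2 - (z - m).2 * (y - m).1 ≤ 0) → False := by
    intro z w hz hw hzm e1R e2R hside
    obtain ⟨g, d1, d2, u, v, hg, hd1, hd2, huv⟩ := primitive (z - m) (sub_ne_zero.2 hzm)
    have hgR : (1 : ℝ) ≤ g := by exact_mod_cast hg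
    simp only [Prod.fst_sub, Prod.snd_sub] at hd1 hd2
    have hd1R : (z.1 - m.1 : ℝ) = g * d1 := by exact_mod_cast hd1
    have hd2R : (z.2 - m.2 : ℝ) = g * d2 := by exact_mod_cast hd2
    obtain ⟨Q, hQ, hQi, hQb, hQL, hQI⟩ := transfer hP u v d1 d2 huv m
    obtain ⟨L', I', D'⟩ := hQ.data
    have hinv : (1 / g : ℝ) ≤ 1 := by rw [div_le_one] <;> linarith
    have km := (D.memL m).1 hm
    have kz := (D.memL z).1 hz
    have kw := (D.memL w).1 hw
    simp only [toR2] at km kz kw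
    have := step1 D' (by rw [D'.memL, hQL]; simpa [toR2] using km)
      (by
        rw [D'.memL, hQL]
        simp only [toR2]
        refine row_combo D.conv (1 / g : ℝ) (by positivity) hinv km kz ?_ ?_
        · push_cast; field_simp; linear_combination -hd1R
        · push_cast; field_simp; linear_combination -hd2R)
      (by
        rw [D'.memL, hQL]
        simp only [toR2]
        refine row_combo D.conv (1 / g : ℝ) (by positivity) hinv km kw ?_ ?_
        · push_cast; field_simp; linear_combination hd1R - e1R
        · push_cast; field_simp; linear_combination hd2R - e2R)
      (by
        rintro ⟨x, y⟩ hy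
        rw [D'.memL, hQL, ← D.memL] at hy
        have := hside _ hy
        simp only [Prod.fst_sub, Prod.snd_sub] at this
        rw [hd1, hd2] at this
        have e : g * d1 * (m.2 + d2 * x + u * y - m.2) - g * d2 * (m.1 + d1 * x - v * y - m.1)
          = g * y := by linear_combination g * y * huv
        rw [e] at this
        simp only
        by_contra! hy
        have := mul_pos hg hy
        omega)
      (by rw [← D'.ic, hQi, D.ic, hi])
    rw [← D'.bc, hQb, D.bc] at this
    omega
  have hzm : z ≠ m := by
    rintro rfl
    exact hzw (Prod.ext (by omega) (by omega))
  have hwm : w ≠ m := by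
    rintro rfl
    exact hzw (Prod.ext (by omega) (by omega))
  -- sign
  set X : ℝ := (z.1 : ℝ) - m.1 with hX
  set Y : ℝ := (z.2 : ℝ) - m.2 with hY
  have hXY : 0 < X ^ 2 + Y ^ 2 := by
    have : X ≠ 0 ∨ Y ≠ 0 := by
      by_contra! h
      apply hzm
      have h1 : (z.1 : ℝ) = m.1 := by linarith [h.1]
      have h2 : (z.2 : ℝ) = m.2 := by linarith [h.2]
      exact Prod.ext (by exact_mod_cast h1) (by exact_mod_cast h2)
    rcases this with h | h <;> positivity
  -- `(α, β) = lam * (-Y, X)` up to a positive factor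
  set lam : ℝ := β * X - α * Y with hlam
  have hA : α * (X ^ 2 + Y ^ 2) = -lam * Y := by rw [hlam]; linear_combination X * seq
  have hB : β * (X ^ 2 + Y ^ 2) = lam * X := by rw [hlam]; linear_combination Y * seq
  have hlam0 : lam ≠ 0 := by
    intro h0
    rw [h0] at hA hB
    simp only [neg_zero, zero_mul, mul_eq_zero] at hA hB
    rcases hab with h | h
    · exact (hA.resolve_left h |>.not_gt) hXY
    · exact (hB.resolve_left h |>.not_gt) hXY
  have hcross : ∀ y ∈ L, lam * (X * ((y.2 : ℝ) - m.2) - Y * ((y.1 : ℝ) - m.1)) ≤ 0 := by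
    intro y hy
    have h1 := hsup _ ((D.memL y).1 hy)
    have h2 : (X ^ 2 + Y ^ 2) * (α * ((y.1 : ℝ) - m.1) + β * ((y.2 : ℝ) - m.2)) ≤ 0 := by
      apply mul_nonpos_of_nonneg_of_nonpos hXY.le
      simp only [toR2] at h1
      linarith
    have h3 : lam * (X * ((y.2 : ℝ) - m.2) - Y * ((y.1 : ℝ) - m.1)) =
        (X ^ 2 + Y ^ 2) * (α * ((y.1 : ℝ) - m.1) + β * ((y.2 : ℝ) - m.2)) := by
      linear_combination (-((y.1 : ℝ) - m.1)) * hA - ((y.2 : ℝ) - m.2) * hB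
    rw [h3]; exact h2
  rcases lt_or_gt_of_ne hlam0 with hl | hl
  · refine core w z hw hz hwm (by linarith) (by linarith) ?_
    intro y hy
    have h1 := hcross y hy
    have h2 : 0 ≤ X * ((y.2 : ℝ) - m.2) - Y * ((y.1 : ℝ) - m.1) := by
      by_contra! h; nlinarith
    have h3 : ((w.1 : ℝ) - m.1) * ((y.2 : ℝ) - m.2) - ((w.2 : ℝ) - m.2) * ((y.1 : ℝ) - m.1) ≤ 0 := by
      have f1 : (w.1 : ℝ) - m.1 = -X := by linarith
      have f2 : (w.2 : ℝ) - m.2 = -Y := by linarith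
      rw [f1, f2]; linarith
    simp only [Prod.fst_sub, Prod.snd_sub]
    exact_mod_cast h3
  · refine core z w hz hw hzm e1R e2R ?_
    intro y hy
    have h1 := hcross y hy
    have h2 : X * ((y.2 : ℝ) - m.2) - Y * ((y.1 : ℝ) - m.1) ≤ 0 := by
      by_contra! h; nlinarith
    rw [hX, hY] at h2
    simp only [Prod.fst_sub, Prod.snd_sub]
    exact_mod_cast h2

lemma main_aux : ∀ n : ℕ, ∀ P, LP P → icount P = n → 1 ≤ n →
    (bcount P = 9 ∧ n = 1) ∨ bcount P ≤ 2 * n + 6 := by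
  intro n
  induction n using Nat.strong_induction_on with
  | _ n ih =>
    intro P hP hPn hn
    by_cases h1 : n = 1
    · subst h1
      have := case_one hP hPn
      omega
    · right
      rw [← hPn]
      apply case_many hP (by omega)
      intro Q hQ hQ1 hQ2
      have := ih (icount Q) (by omega) Q hQ rfl hQ1
      omega

/-- **Scott's theorem.** For a lattice polygon `P` with `i(P) ≥ 1`, either
`(b(P), i(P)) = (9, 1)` or `b(P) ≤ 2·i(P) + 6`. -/
theorem scott (P : Set (ℝ × ℝ)) (hP : IsLatticePolygon P) (hi : 1 ≤ icount P) :
    (bcount P = 9 ∧ icount P = 1) ∨ bcount P ≤ 2 * icount P + 6 := by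
  obtain ⟨S, hS, _⟩ := hP
  exact main_aux (icount P) P ⟨S, hS⟩ rfl hi
end

section
/- For every integer c ≥ 2 there is no lattice triangle T satisfying ((c−1)/2)·b(T) − (c−1) < i(T) < (c/2)·b(T) − c(c+2). -/
open MeasureTheory

/-- Arithmetic core, for sorted edge lengths. -/
lemma arith_sorted (c N a1 a2 a3 : ℤ) (hc : 2 ≤ c) (hN : 0 < N) (h3 : 0 < a3) (h32 : a3 ≤ a2)
    (h21 : a2 ≤ a1) (d12 : a1 * a2 ∣ N) (d13 : a1 * a3 ∣ N) (d23 : a2 * a3 ∣ N)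
    (hg : ∀ d : ℤ, d ∣ a1 → d ∣ a2 → d ∣ a3)
    (hlo : c * (a1 + a2 + a3 - 2) < N)
    (hhi : N < (c + 1) * (a1 + a2 + a3 - 2 - 2 * c)) : False := by
  obtain ⟨m, rfl⟩ := d12
  have h2 : 0 < a2 := by linarith
  have h1 : 0 < a1 := by linarith
  have hm : 0 < m := by
    have : 0 < a1 * a2 := by positivity
    exact (mul_pos_iff_of_pos_left this).1 hN
  -- the height over the longest edge is at least `c + 1`
  have hh : c + 1 ≤ a2 * m := by
    by_contra hcon
    have h' : a2 * m ≤ c := by linarith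
    have : a1 * (a2 * m) ≤ a1 * c := mul_le_mul_of_nonneg_left h' h1.le
    nlinarith
  have hs : 2 * c + 3 ≤ a2 + a3 := by
    have e1 : a1 * (c + 1) ≤ a1 * (a2 * m) := mul_le_mul_of_nonneg_left hh h1.le
    have e2 : (c + 1) * a1 < (c + 1) * (a1 + a2 + a3 - 2 - 2 * c) := by nlinarith
    have e3 := lt_of_mul_lt_mul_left e2 (by linarith)
    linarith
  have hc2 : c + 2 ≤ a2 := by linarith
  rcases (show m = 1 ∨ 2 ≤ m by omega) with rfl | hm2
  · have e32 : a3 ∣ a2 := by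
      have : a1 * a3 ∣ a1 * a2 := by simpa using d13
      exact (mul_dvd_mul_iff_left h1.ne').1 this
    have e31 : a3 ∣ a1 := by
      have : a2 * a3 ∣ a2 * a1 := by rw [mul_comm a2 a1]; simpa using d23
      exact (mul_dvd_mul_iff_left h2.ne').1 this
    obtain ⟨x2, rfl⟩ := e32
    obtain ⟨x1, rfl⟩ := e31
    have hx2 : 0 < x2 := (mul_pos_iff_of_pos_left h3).1 h2
    have hx21 : x2 ≤ x1 := le_of_mul_le_mul_left h21 h3
    rcases (show x2 = 1 ∨ 2 ≤ x2 by omega) with rfl | hx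
    · have hx1 : x1 = 1 := by
        by_contra hne
        have h2x : 2 ≤ x1 := by omega
        have : a3 * 2 ≤ a3 * x1 := mul_le_mul_of_nonneg_left h2x h3.le
        nlinarith [mul_nonneg (show 0 ≤ a3 * x1 - 2 * (c + 1) by linarith)
          (show 0 ≤ a3 - (c + 1) by linarith)]
      subst hx1
      have hlt : a3 < 2 * (c + 1) := by
        by_contra hcon
        nlinarith [mul_nonneg (show 0 ≤ a3 - 2 * (c + 1) by linarith)
          (show 0 ≤ a3 - (c + 1) by linarith)]
      nlinarith [mul_nonneg (show 0 ≤ 2 * c + 1 - a3 by linarith)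
          (show 0 ≤ a3 - (c + 2) by linarith)]
    · have hA : 2 * a3 ≤ a3 * x2 := by nlinarith
      have hub : 2 * (a3 * x1) < 3 * (c + 1) := by
        by_contra hcon
        nlinarith [mul_nonneg (show 0 ≤ 2 * (a3 * x1) - 3 * (c + 1) by linarith)
          (show 0 ≤ a3 * x2 - (c + 1) by linarith)]
      have hx1 : x1 < 3 := by
        by_contra hcon
        have : a3 * 3 ≤ a3 * x1 := mul_le_mul_of_nonneg_left (by linarith) h3.le
        linarith
      have e2 : x2 = 2 := by omega
      have e1 : x1 = 2 := by omega
      subst e1 e2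
      have := Int.le_of_dvd h3 (hg (a3 * 2) dvd_rfl dvd_rfl)
      linarith
  · have : a1 * a2 * 2 ≤ a1 * a2 * m := mul_le_mul_of_nonneg_left hm2 (by positivity)
    nlinarith [mul_nonneg (show 0 ≤ a1 - (c + 1) by linarith)
          (show 0 ≤ 2 * a2 - (c + 1) by linarith)]

lemma arith (c N a1 a2 a3 : ℤ) (hc : 2 ≤ c) (hN : 0 < N) (h1 : 0 < a1) (h2 : 0 < a2)
    (h3 : 0 < a3) (d12 : a1 * a2 ∣ N) (d13 : a1 * a3 ∣ N) (d23 : a2 * a3 ∣ N)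
    (hg3 : ∀ d : ℤ, d ∣ a1 → d ∣ a2 → d ∣ a3)
    (hg2 : ∀ d : ℤ, d ∣ a1 → d ∣ a3 → d ∣ a2)
    (hg1 : ∀ d : ℤ, d ∣ a2 → d ∣ a3 → d ∣ a1)
    (hlo : c * (a1 + a2 + a3 - 2) < N)
    (hhi : N < (c + 1) * (a1 + a2 + a3 - 2 - 2 * c)) : False := by
  have d21 := mul_comm a1 a2 ▸ d12
  have d31 := mul_comm a1 a3 ▸ d13
  have d32 := mul_comm a2 a3 ▸ d23
  rcases le_total a1 a2 with h12 | h12 <;> rcases le_total a2 a3 with h23 | h23 <;>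
    rcases le_total a1 a3 with h13 | h13
  · exact arith_sorted c N a3 a2 a1 hc hN h1 h12 h23 d32 d31 d21 (fun d x y => hg1 d y x)
      (by linarith) (by convert hhi using 2; ring)
  · exact arith_sorted c N a3 a2 a1 hc hN h1 h12 h23 d32 d31 d21 (fun d x y => hg1 d y x)
      (by linarith) (by convert hhi using 2; ring)
  · exact arith_sorted c N a2 a3 a1 hc hN h1 h13 h23 d23 d21 d31 hg1
      (by linarith) (by convert hhi using 2; ring)
  · exact arith_sorted c N a2 a1 a3 hc hN h3 h13 h12 d21 d23 d13 (fun d x y => hg3 d y x)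
      (by linarith) (by convert hhi using 2; ring)
  · exact arith_sorted c N a3 a1 a2 hc hN h2 h12 h13 d31 d32 d12 (fun d x y => hg2 d y x)
      (by linarith) (by convert hhi using 2; ring)
  · exact arith_sorted c N a1 a3 a2 hc hN h2 h23 h13 d13 d12 d32 hg2
      (by linarith) (by convert hhi using 2; ring)
  · exact arith_sorted c N a1 a2 a3 hc hN h3 h23 h12 d12 d13 d23 hg3
      (by linarith) (by convert hhi using 2)
  · exact arith_sorted c N a1 a2 a3 hc hN h3 h23 h12 d12 d13 d23 hg3
      (by linarith) (by convert hhi using 2)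

/-- Number of lattice points on a half-open segment. -/
lemma seg_count (u1 u2 l1 l2 : ℤ) (hL : 0 < l1 * u1 + l2 * u2) :
    Set.ncard {z : ℤ × ℤ | u1 * z.2 = u2 * z.1 ∧ 0 ≤ l1 * z.1 + l2 * z.2 ∧
      l1 * z.1 + l2 * z.2 < l1 * u1 + l2 * u2} = Int.gcd u1 u2 := by
  have hg : 0 < Int.gcd u1 u2 := by
    rw [Int.gcd_pos_iff]
    by_contra! h
    rw [h.1, h.2] at hL
    simp at hL
  obtain ⟨g, w1, w2, hg0, hcop, e1, e2⟩ := Int.exists_gcd_one' hg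
  have hgg : Int.gcd u1 u2 = g := by
    rw [e1, e2, Int.gcd_mul_right, hcop]; simp
  rw [hgg]
  have hgz : (0 : ℤ) < g := by exact_mod_cast hg0
  have hLw : 0 < l1 * w1 + l2 * w2 := by
    have : 0 < (l1 * w1 + l2 * w2) * g := by rw [e1, e2] at hL; linarith
    exact (mul_pos_iff_of_pos_right hgz).1 this
  have hw : w1 ≠ 0 ∨ w2 ≠ 0 := by
    by_contra! h
    rw [h.1, h.2] at hLw
    simp at hLw
  have key : {z : ℤ × ℤ | u1 * z.2 = u2 * z.1 ∧ 0 ≤ l1 * z.1 + l2 * z.2 ∧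
      l1 * z.1 + l2 * z.2 < l1 * u1 + l2 * u2} =
      ((Finset.range g).image (fun k : ℕ => ((k : ℤ) * w1, (k : ℤ) * w2)) : Finset (ℤ × ℤ)) := by
    ext ⟨x, y⟩
    simp only [Set.mem_ofPred_eq, Finset.coe_image, Set.mem_image, Finset.coe_range, Set.mem_Iio,
      Prod.mk.injEq]
    constructor
    · rintro ⟨h1, h2, h3⟩
      have h1' : w1 * y = w2 * x := by
        have : (g : ℤ) * (w1 * y) = g * (w2 * x) := by rw [e1, e2] at h1; linarith
        exact mul_left_cancel₀ hgz.ne' this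
      have hc' : IsCoprime w1 w2 := Int.isCoprime_iff_gcd_eq_one.2 hcop
      obtain ⟨α, β, hab⟩ := hc'
      have hx : x = (α * x + β * y) * w1 := by linear_combination (-x) * hab - β * h1'
      have hy : y = (α * x + β * y) * w2 := by linear_combination (-y) * hab + α * h1'
      generalize α * x + β * y = k at hx hy
      have hk0 : 0 ≤ k := by
        have : 0 ≤ k * (l1 * w1 + l2 * w2) := by rw [hx, hy] at h2; linarith
        exact nonneg_of_mul_nonneg_left this hLw
      have hkg : k < g := by
        have : k * (l1 * w1 + l2 * w2) < g * (l1 * w1 + l2 * w2) := by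
          rw [hx, hy, e1, e2] at h3; linarith
        exact lt_of_mul_lt_mul_right this hLw.le
      lift k to ℕ using hk0
      exact ⟨k, by exact_mod_cast hkg, hx.symm, hy.symm⟩
    · rintro ⟨k, hk, rfl, rfl⟩
      have hk' : (k : ℤ) < g := by exact_mod_cast hk
      refine ⟨by rw [e1, e2]; ring, ?_, ?_⟩
      · have : 0 ≤ (k : ℤ) * (l1 * w1 + l2 * w2) := by positivity
        linarith
      · have : k * (l1 * w1 + l2 * w2) < g * (l1 * w1 + l2 * w2) :=
          mul_lt_mul_of_pos_right hk' hLw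
        rw [e1, e2]; linarith
  rw [key, Set.ncard_coe_finset, Finset.card_image_of_injective, Finset.card_range]
  intro a b hab
  simp only [Prod.mk.injEq] at hab
  rcases hw with h | h
  · exact_mod_cast mul_right_cancel₀ h hab.1
  · exact_mod_cast mul_right_cancel₀ h hab.2

/-- Number of lattice points in a half-open parallelogram. -/
lemma par_count (p1 p2 q1 q2 : ℤ) (hN : 0 < p1 * q2 - p2 * q1) :
    (Set.ncard {z : ℤ × ℤ | (0 ≤ q2 * z.1 - q1 * z.2 ∧ q2 * z.1 - q1 * z.2 < p1 * q2 - p2 * q1) ∧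
      (0 ≤ p1 * z.2 - p2 * z.1 ∧ p1 * z.2 - p2 * z.1 < p1 * q2 - p2 * q1)} : ℤ)
      = p1 * q2 - p2 * q1 := by
  set N := p1 * q2 - p2 * q1 with hNdef
  let A : Matrix (Fin 2) (Fin 2) ℤ := !![p1, q1; p2, q2]
  let bs := Module.Basis.finTwoProd ℤ
  let f : (ℤ × ℤ) →ₗ[ℤ] (ℤ × ℤ) := Matrix.toLin bs bs A
  have hf : ∀ z, f z = (p1 * z.1 + q1 * z.2, p2 * z.1 + q2 * z.2) := by
    rintro ⟨x, y⟩
    simp [f, A, bs, Matrix.toLin_finTwoProd_apply]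
  have hdet : LinearMap.det f = N := by
    simp only [f, LinearMap.det_toLin]
    simp [A, Matrix.det_fin_two, hNdef]; ring
  have hinj : Function.Injective f := by
    rw [← LinearMap.ker_eq_bot, LinearMap.ker_eq_bot']
    rintro ⟨x, y⟩ h
    rw [hf] at h
    simp only [Prod.mk_eq_zero] at h
    have hx : N * x = 0 := by linear_combination q2 * h.1 - q1 * h.2
    have hy : N * y = 0 := by linear_combination p1 * h.2 - p2 * h.1
    ext
    · simpa [hN.ne'] using hx
    · simpa [hN.ne'] using hy
  have hcard := Submodule.natAbs_det_equiv (LinearMap.range f) (LinearEquiv.ofInjective f hinj)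
  have hcomp : ((LinearMap.range f).subtype ∘ₗ
      AddMonoidHom.toIntLinearMap ((LinearEquiv.ofInjective f hinj : _) : (ℤ × ℤ) →+ LinearMap.range f)) = f := by
    ext <;> rfl
  rw [hcomp, hdet] at hcard
  have small : ∀ s : ℤ, -N < N * s → N * s < N → s = 0 := by
    intro s h1 h2
    have a1 : s < 1 := lt_of_mul_lt_mul_left (by linarith) hN.le
    have a2 : -1 < s := lt_of_mul_lt_mul_left (by linarith : N * (-1) < N * s) hN.le
    omega
  have hbij : Function.Bijective (fun z : {z : ℤ × ℤ |
      (0 ≤ q2 * z.1 - q1 * z.2 ∧ q2 * z.1 - q1 * z.2 < N) ∧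
      (0 ≤ p1 * z.2 - p2 * z.1 ∧ p1 * z.2 - p2 * z.1 < N)} =>
      (Submodule.Quotient.mk z.1 : (ℤ × ℤ) ⧸ LinearMap.range f)) := by
    constructor
    · rintro ⟨⟨x, y⟩, ⟨h1, h2⟩, h3, h4⟩ ⟨⟨x', y'⟩, ⟨h1', h2'⟩, h3', h4'⟩ h
      simp only at h
      rw [Submodule.Quotient.eq] at h
      obtain ⟨⟨s, t⟩, hst⟩ := h
      rw [hf] at hst
      simp only [Prod.mk_sub_mk, Prod.mk.injEq] at hst h1 h2 h3 h4 h1' h2' h3' h4'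
      have hs : N * s = (q2 * x - q1 * y) - (q2 * x' - q1 * y') := by
        linear_combination q2 * hst.1 - q1 * hst.2
      have ht : N * t = (p1 * y - p2 * x) - (p1 * y' - p2 * x') := by
        linear_combination p1 * hst.2 - p2 * hst.1
      have hs0 : s = 0 := by
        exact small s (by linarith) (by linarith)
      have ht0 : t = 0 := by
        exact small t (by linarith) (by linarith)
      subst hs0 ht0
      simp only [Subtype.mk.injEq, Prod.mk.injEq]
      constructor <;> linarith [hst.1, hst.2]
    · intro w
      obtain ⟨⟨x, y⟩, rfl⟩ := Submodule.Quotient.mk_surjective _ w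
      set s := (q2 * x - q1 * y) / N with hs
      set t := (p1 * y - p2 * x) / N with ht
      have e1 := Int.emod_add_mul_ediv (q2 * x - q1 * y) N
      have e2 := Int.emod_add_mul_ediv (p1 * y - p2 * x) N
      have f1 := Int.emod_nonneg (q2 * x - q1 * y) hN.ne'
      have f2 := Int.emod_nonneg (p1 * y - p2 * x) hN.ne'
      have g1 := Int.emod_lt_of_pos (q2 * x - q1 * y) hN
      have g2 := Int.emod_lt_of_pos (p1 * y - p2 * x) hN
      rw [← hs] at e1
      rw [← ht] at e2
      have k1 : q2 * (x - (p1 * s + q1 * t)) - q1 * (y - (p2 * s + q2 * t)) =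
        (q2 * x - q1 * y) % N := by rw [hNdef] at e1 ⊢; linear_combination -e1
      have k2 : p1 * (y - (p2 * s + q2 * t)) - p2 * (x - (p1 * s + q1 * t)) =
        (p1 * y - p2 * x) % N := by rw [hNdef] at e2 ⊢; linear_combination -e2
      refine ⟨⟨(x - (p1 * s + q1 * t), y - (p2 * s + q2 * t)), ?_⟩, ?_⟩
      · simp only [Set.mem_ofPred_eq]
        rw [k1, k2]
        exact ⟨⟨f1, g1⟩, f2, g2⟩
      · simp only
        rw [Submodule.Quotient.eq]
        refine ⟨(-s, -t), ?_⟩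
        rw [hf]
        simp only [Prod.mk_sub_mk, Prod.mk.injEq]
        constructor <;> ring
  rw [← Nat.card_coe_set_eq, Nat.card_eq_of_bijective _ hbij, ← hcard]
  exact Int.natAbs_of_nonneg hN.le

/-- Boundary lattice points of the triangle with vertices `0, P, Q`. -/
def bdSet (p1 p2 q1 q2 : ℤ) : Set (ℤ × ℤ) :=
  {z | (0 ≤ q2 * z.1 - q1 * z.2 ∧ 0 ≤ p1 * z.2 - p2 * z.1 ∧
    (q2 * z.1 - q1 * z.2) + (p1 * z.2 - p2 * z.1) ≤ p1 * q2 - p2 * q1) ∧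
    ¬ (0 < q2 * z.1 - q1 * z.2 ∧ 0 < p1 * z.2 - p2 * z.1 ∧
    (q2 * z.1 - q1 * z.2) + (p1 * z.2 - p2 * z.1) < p1 * q2 - p2 * q1)}

/-- Interior lattice points of the triangle with vertices `0, P, Q`. -/
def inSet (p1 p2 q1 q2 : ℤ) : Set (ℤ × ℤ) :=
  {z | 0 < q2 * z.1 - q1 * z.2 ∧ 0 < p1 * z.2 - p2 * z.1 ∧
    (q2 * z.1 - q1 * z.2) + (p1 * z.2 - p2 * z.1) < p1 * q2 - p2 * q1}

/-- Pick's theorem for triangles, with the boundary count. -/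
lemma pick (p1 p2 q1 q2 : ℤ) (hN : 0 < p1 * q2 - p2 * q1) :
    (bdSet p1 p2 q1 q2).ncard = Int.gcd p1 p2 + Int.gcd q1 q2 + Int.gcd (p1 - q1) (p2 - q2) ∧
    ((p1 * q2 - p2 * q1) + 2 : ℤ) =
      (bdSet p1 p2 q1 q2).ncard + 2 * ((inSet p1 p2 q1 q2).ncard : ℤ) := by
  have hD := par_count p1 p2 q1 q2 hN
  set D : Set (ℤ × ℤ) := {z : ℤ × ℤ | (0 ≤ q2 * z.1 - q1 * z.2 ∧ q2 * z.1 - q1 * z.2 < p1 * q2 - p2 * q1) ∧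
      (0 ≤ p1 * z.2 - p2 * z.1 ∧ p1 * z.2 - p2 * z.1 < p1 * q2 - p2 * q1)} with hDdef
  have hDfin : D.Finite := Set.finite_of_ncard_pos (by
    have : (0 : ℤ) < D.ncard := by rw [hD]; exact hN
    exact_mod_cast this)
  have c2 := seg_count q1 q2 (-p2) p1 (by linarith)
  have c1 := seg_count p1 p2 q2 (-q1) (by linarith)
  have c3 := seg_count (p1 - q1) (p2 - q2) q2 (-q1) (by linarith)
  have hg (u1 u2 : ℤ) (h : u1 ≠ 0 ∨ u2 ≠ 0) : 0 < Int.gcd u1 u2 := Int.gcd_pos_iff.2 h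
  have gp : 0 < Int.gcd p1 p2 := hg _ _ (by
    by_contra! h; rw [h.1, h.2] at hN; simp at hN)
  have gq : 0 < Int.gcd q1 q2 := hg _ _ (by
    by_contra! h; rw [h.1, h.2] at hN; simp at hN)
  have gr : 0 < Int.gcd (p1 - q1) (p2 - q2) := hg _ _ (by
    by_contra! h
    have e1 : p1 = q1 := by linarith [h.1]
    have e2 : p2 = q2 := by linarith [h.2]
    rw [e1, e2] at hN; linarith)
  set X2 : Set (ℤ × ℤ) := {z : ℤ × ℤ | q1 * z.2 = q2 * z.1 ∧ 0 ≤ (-p2) * z.1 + p1 * z.2 ∧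
      (-p2) * z.1 + p1 * z.2 < (-p2) * q1 + p1 * q2} with hX2
  set X1 : Set (ℤ × ℤ) := {z : ℤ × ℤ | p1 * z.2 = p2 * z.1 ∧ 0 ≤ q2 * z.1 + (-q1) * z.2 ∧
      q2 * z.1 + (-q1) * z.2 < q2 * p1 + (-q1) * p2} with hX1
  set X3 : Set (ℤ × ℤ) := {z : ℤ × ℤ | (p1 - q1) * z.2 = (p2 - q2) * z.1 ∧
      0 ≤ q2 * z.1 + (-q1) * z.2 ∧
      q2 * z.1 + (-q1) * z.2 < q2 * (p1 - q1) + (-q1) * (p2 - q2)} with hX3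
  have F1 : X1.Finite := Set.finite_of_ncard_pos (by rw [c1]; exact gp)
  have F2 : X2.Finite := Set.finite_of_ncard_pos (by rw [c2]; exact gq)
  have F3 : X3.Finite := Set.finite_of_ncard_pos (by rw [c3]; exact gr)
  set Y1 : Set (ℤ × ℤ) := (fun z => (p1, p2) - z) '' X1 with hY1
  set Y3 : Set (ℤ × ℤ) := (fun z => (q1, q2) + z) '' X3 with hY3
  have G1 : Y1.Finite := F1.image _
  have G3 : Y3.Finite := F3.image _
  have C1 : Y1.ncard = Int.gcd p1 p2 := by
    rw [hY1, Set.ncard_image_of_injective _ sub_right_injective, c1]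
  have C3 : Y3.ncard = Int.gcd (p1 - q1) (p2 - q2) := by
    rw [hY3, Set.ncard_image_of_injective _ (add_right_injective _), c3]
  have mY1 : ∀ z : ℤ × ℤ, z ∈ Y1 ↔ (p1 * z.2 - p2 * z.1 = 0 ∧ 0 < q2 * z.1 - q1 * z.2 ∧
      q2 * z.1 - q1 * z.2 ≤ p1 * q2 - p2 * q1) := by
    rintro ⟨x, y⟩
    constructor
    · rintro ⟨⟨x', y'⟩, ⟨h1, h2, h3⟩, h4⟩
      simp only [Prod.mk_sub_mk, Prod.mk.injEq] at h1 h2 h3 h4 ⊢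
      obtain ⟨rfl, rfl⟩ := h4
      refine ⟨by linarith, by linarith, by linarith⟩
    · rintro ⟨h1, h2, h3⟩
      simp only at h1 h2 h3
      refine ⟨(p1 - x, p2 - y), ⟨?_, ?_, ?_⟩, by simp⟩
      · simp only; linarith
      · simp only; linarith
      · simp only; linarith
  have mY3 : ∀ z : ℤ × ℤ, z ∈ Y3 ↔
      ((q2 * z.1 - q1 * z.2) + (p1 * z.2 - p2 * z.1) = p1 * q2 - p2 * q1 ∧
      0 ≤ q2 * z.1 - q1 * z.2 ∧ q2 * z.1 - q1 * z.2 < p1 * q2 - p2 * q1) := by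
    rintro ⟨x, y⟩
    constructor
    · rintro ⟨⟨x', y'⟩, ⟨h1, h2, h3⟩, h4⟩
      simp only [Prod.mk_add_mk, Prod.mk.injEq] at h1 h2 h3 h4 ⊢
      obtain ⟨rfl, rfl⟩ := h4
      refine ⟨by linarith, by linarith, by linarith⟩
    · rintro ⟨h1, h2, h3⟩
      simp only at h1 h2 h3
      refine ⟨(x - q1, y - q2), ⟨?_, ?_, ?_⟩, by simp⟩
      · simp only; linarith
      · simp only; linarith
      · simp only; linarith
  have mX2 : ∀ z : ℤ × ℤ, z ∈ X2 ↔ (q2 * z.1 - q1 * z.2 = 0 ∧ 0 ≤ p1 * z.2 - p2 * z.1 ∧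
      p1 * z.2 - p2 * z.1 < p1 * q2 - p2 * q1) := by
    rintro ⟨x, y⟩
    constructor
    · rintro ⟨h1, h2, h3⟩
      simp only at h1 h2 h3 ⊢
      refine ⟨by linarith, by linarith, by linarith⟩
    · rintro ⟨h1, h2, h3⟩
      simp only at h1 h2 h3
      refine ⟨?_, ?_, ?_⟩
      · simp only; linarith
      · simp only; linarith
      · simp only; linarith
  set I : Set (ℤ × ℤ) := inSet p1 p2 q1 q2 with hI
  set J : Set (ℤ × ℤ) := (fun z => (p1 + q1, p2 + q2) - z) '' I with hJ
  have CJ : J.ncard = I.ncard := by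
    rw [hJ, Set.ncard_image_of_injective _ sub_right_injective]
  have mI : ∀ z : ℤ × ℤ, z ∈ I ↔ (0 < q2 * z.1 - q1 * z.2 ∧ 0 < p1 * z.2 - p2 * z.1 ∧
    (q2 * z.1 - q1 * z.2) + (p1 * z.2 - p2 * z.1) < p1 * q2 - p2 * q1) := fun z => Iff.rfl
  have mJ : ∀ z : ℤ × ℤ, z ∈ J ↔ (q2 * z.1 - q1 * z.2 < p1 * q2 - p2 * q1 ∧
    p1 * z.2 - p2 * z.1 < p1 * q2 - p2 * q1 ∧
    p1 * q2 - p2 * q1 < (q2 * z.1 - q1 * z.2) + (p1 * z.2 - p2 * z.1)) := by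
    rintro ⟨x, y⟩
    constructor
    · rintro ⟨⟨x', y'⟩, ⟨h1, h2, h3⟩, h4⟩
      simp only [Prod.mk_sub_mk, Prod.mk.injEq] at h1 h2 h3 h4 ⊢
      obtain ⟨rfl, rfl⟩ := h4
      refine ⟨by linarith, by linarith, by linarith⟩
    · rintro ⟨h1, h2, h3⟩
      simp only at h1 h2 h3
      refine ⟨(p1 + q1 - x, p2 + q2 - y), ⟨?_, ?_, ?_⟩, by simp⟩
      · simp only; linarith
      · simp only; linarith
      · simp only; linarith
  have mD : ∀ z : ℤ × ℤ, z ∈ D ↔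
      ((0 ≤ q2 * z.1 - q1 * z.2 ∧ q2 * z.1 - q1 * z.2 < p1 * q2 - p2 * q1) ∧
      (0 ≤ p1 * z.2 - p2 * z.1 ∧ p1 * z.2 - p2 * z.1 < p1 * q2 - p2 * q1)) := fun z => Iff.rfl
  have FI : I.Finite := hDfin.subset (by
    intro z hz; rw [mI] at hz; rw [mD]; omega)
  have FJ : J.Finite := FI.image _
  have mB : ∀ z : ℤ × ℤ, z ∈ bdSet p1 p2 q1 q2 ↔ ((0 ≤ q2 * z.1 - q1 * z.2 ∧ 0 ≤ p1 * z.2 - p2 * z.1 ∧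
    (q2 * z.1 - q1 * z.2) + (p1 * z.2 - p2 * z.1) ≤ p1 * q2 - p2 * q1) ∧
    ¬ (0 < q2 * z.1 - q1 * z.2 ∧ 0 < p1 * z.2 - p2 * z.1 ∧
    (q2 * z.1 - q1 * z.2) + (p1 * z.2 - p2 * z.1) < p1 * q2 - p2 * q1)) := fun z => Iff.rfl
  have hB : bdSet p1 p2 q1 q2 = (Y1 ∪ X2) ∪ Y3 := by
    ext z
    simp only [Set.mem_union]
    rw [mB, mY1, mX2, mY3]
    generalize q2 * z.1 - q1 * z.2 = s
    generalize p1 * z.2 - p2 * z.1 = t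
    generalize p1 * q2 - p2 * q1 = N at hN
    omega
  have hBc : (bdSet p1 p2 q1 q2).ncard =
      Int.gcd p1 p2 + Int.gcd q1 q2 + Int.gcd (p1 - q1) (p2 - q2) := by
    rw [hB, Set.ncard_union_eq _ (G1.union F2) G3, Set.ncard_union_eq _ G1 F2, C1, c2, C3]
    · rw [Set.disjoint_left]
      intro z
      rw [mY1, mX2]; omega
    · rw [Set.disjoint_left]
      intro z
      rw [Set.mem_union, mY1, mX2, mY3]; omega
  refine ⟨hBc, ?_⟩
  have FB : (bdSet p1 p2 q1 q2).Finite := by rw [hB]; exact (G1.union F2).union G3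
  have hU : insert (p1, p2) (insert (q1, q2) D) = (bdSet p1 p2 q1 q2 ∪ I) ∪ J := by
    ext z
    simp only [Set.mem_union, Set.mem_insert_iff]
    rw [mB, mI, mJ, mD]
    have hP : z = (p1, p2) ↔ (q2 * z.1 - q1 * z.2 = p1 * q2 - p2 * q1 ∧ p1 * z.2 - p2 * z.1 = 0) := by
      obtain ⟨x, y⟩ := z
      simp only [Prod.mk.injEq]
      constructor
      · rintro ⟨rfl, rfl⟩; constructor <;> ring
      · rintro ⟨h1, h2⟩
        constructor
        · apply mul_left_cancel₀ hN.ne'; linear_combination p1 * h1 + q1 * h2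
        · apply mul_left_cancel₀ hN.ne'; linear_combination p2 * h1 + q2 * h2
    have hQ : z = (q1, q2) ↔ (q2 * z.1 - q1 * z.2 = 0 ∧ p1 * z.2 - p2 * z.1 = p1 * q2 - p2 * q1) := by
      obtain ⟨x, y⟩ := z
      simp only [Prod.mk.injEq]
      constructor
      · rintro ⟨rfl, rfl⟩; constructor <;> ring
      · rintro ⟨h1, h2⟩
        constructor
        · apply mul_left_cancel₀ hN.ne'; linear_combination p1 * h1 + q1 * h2
        · apply mul_left_cancel₀ hN.ne'; linear_combination p2 * h1 + q2 * h2
    rw [hP, hQ]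
    generalize q2 * z.1 - q1 * z.2 = s
    generalize p1 * z.2 - p2 * z.1 = t
    generalize p1 * q2 - p2 * q1 = N at hN
    omega
  have hc := congrArg Set.ncard hU
  rw [Set.ncard_union_eq _ (FB.union FI) FJ, Set.ncard_union_eq _ FB FI, CJ,
    Set.ncard_insert_of_notMem _ (hDfin.insert _), Set.ncard_insert_of_notMem _ hDfin] at hc
  · zify at hc
    linarith
  · rw [mD]; simp only; intro h; linarith [h.2.2]
  · rw [Set.mem_insert_iff, mD]
    rintro (h | h)
    · simp only [Prod.mk.injEq] at h
      rw [h.1, h.2] at hN; linarith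
    · simp only at h; linarith [h.1.2]
  · rw [Set.disjoint_left]
    intro z
    rw [mB, mI]; tauto
  · rw [Set.disjoint_left]
    intro z
    rw [Set.mem_union, mB, mI, mJ]; omega

/-- No triangle `0, P, Q` violates the theorem. -/
lemma core (c p1 p2 q1 q2 : ℤ) (hc : 2 ≤ c) (hN : 0 < p1 * q2 - p2 * q1)
    (b i : ℕ) (hb : b = (bdSet p1 p2 q1 q2).ncard) (hi : i = (inSet p1 p2 q1 q2).ncard)
    (h1 : (c - 1) * (b - 2) < 2 * (i : ℤ)) (h2 : 2 * (i : ℤ) < c * b - 2 * c * (c + 2)) :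
    False := by
  obtain ⟨e1, e2⟩ := pick p1 p2 q1 q2 hN
  rw [← hb] at e1 e2
  rw [← hi] at e2
  have e1' : (b : ℤ) = Int.gcd p1 p2 + Int.gcd q1 q2 + Int.gcd (p1 - q1) (p2 - q2) := by
    exact_mod_cast e1
  have A1 := Int.gcd_dvd_left p1 p2
  have A2 := Int.gcd_dvd_right p1 p2
  have B1 := Int.gcd_dvd_left q1 q2
  have B2 := Int.gcd_dvd_right q1 q2
  have D1 := Int.gcd_dvd_left (p1 - q1) (p2 - q2)
  have D2 := Int.gcd_dvd_right (p1 - q1) (p2 - q2)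
  have hg (u1 u2 : ℤ) (h : u1 ≠ 0 ∨ u2 ≠ 0) : (0 : ℤ) < Int.gcd u1 u2 := by
    exact_mod_cast Int.gcd_pos_iff.2 h
  have gp : (0 : ℤ) < Int.gcd p1 p2 := hg _ _ (by
    by_contra! h; rw [h.1, h.2] at hN; simp at hN)
  have gq : (0 : ℤ) < Int.gcd q1 q2 := hg _ _ (by
    by_contra! h; rw [h.1, h.2] at hN; simp at hN)
  have gr : (0 : ℤ) < Int.gcd (p1 - q1) (p2 - q2) := hg _ _ (by
    by_contra! h
    have e1 : p1 = q1 := by linarith [h.1]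
    have e2 : p2 = q2 := by linarith [h.2]
    rw [e1, e2] at hN; linarith)
  refine arith c (p1 * q2 - p2 * q1) (Int.gcd p1 p2) (Int.gcd q1 q2)
    (Int.gcd (p1 - q1) (p2 - q2)) hc hN gp gq gr ?_ ?_ ?_ ?_ ?_ ?_ ?_ ?_
  · exact dvd_sub (mul_dvd_mul A1 B2) (mul_dvd_mul A2 B1)
  · have := dvd_sub (mul_dvd_mul A2 D1) (mul_dvd_mul A1 D2)
    rwa [show p2 * (p1 - q1) - p1 * (p2 - q2) = p1 * q2 - p2 * q1 by ring] at this
  · have := dvd_sub (mul_dvd_mul B2 D1) (mul_dvd_mul B1 D2)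
    rwa [show q2 * (p1 - q1) - q1 * (p2 - q2) = p1 * q2 - p2 * q1 by ring] at this
  · intro d x y
    exact Int.dvd_coe_gcd (dvd_sub (x.trans A1) (y.trans B1)) (dvd_sub (x.trans A2) (y.trans B2))
  · intro d x y
    refine Int.dvd_coe_gcd ?_ ?_
    · have := dvd_sub (x.trans A1) (y.trans D1); simpa using this
    · have := dvd_sub (x.trans A2) (y.trans D2); simpa using this
  · intro d x y
    refine Int.dvd_coe_gcd ?_ ?_
    · have := dvd_add (x.trans B1) (y.trans D1); simpa using this
    · have := dvd_add (x.trans B2) (y.trans D2); simpa using this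
  · rw [← e1']; linarith
  · rw [← e1']; linarith

lemma fin3 (p : Fin 3 → Prop) : (∀ i, p i) ↔ p 0 ∧ p 1 ∧ p 2 := by
  constructor
  · intro h; exact ⟨h 0, h 1, h 2⟩
  · rintro ⟨h0, h1, h2⟩ i
    fin_cases i
    · exact h0
    · exact h1
    · exact h2

/-- Membership of lattice points in the interior and the frontier of a triangle. -/
lemma tri_mem (v0 v1 v2 : ℤ × ℤ) (hind : AffineIndependent ℝ ![toR2 v0, toR2 v1, toR2 v2]) :
    (v1.1 - v0.1) * (v2.2 - v0.2) - (v1.2 - v0.2) * (v2.1 - v0.1) ≠ 0 ∧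
    (0 < (v1.1 - v0.1) * (v2.2 - v0.2) - (v1.2 - v0.2) * (v2.1 - v0.1) →
    ∀ z : ℤ × ℤ,
      (toR2 z ∈ interior (convexHull ℝ {toR2 v0, toR2 v1, toR2 v2}) ↔
        z - v0 ∈ inSet (v1.1 - v0.1) (v1.2 - v0.2) (v2.1 - v0.1) (v2.2 - v0.2)) ∧
      (toR2 z ∈ frontier (convexHull ℝ {toR2 v0, toR2 v1, toR2 v2}) ↔
        z - v0 ∈ bdSet (v1.1 - v0.1) (v1.2 - v0.2) (v2.1 - v0.1) (v2.2 - v0.2))) := by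
  have htop : affineSpan ℝ (Set.range ![toR2 v0, toR2 v1, toR2 v2]) = ⊤ := by
    rw [hind.affineSpan_eq_top_iff_card_eq_finrank_add_one]
    simp
  let B : AffineBasis (Fin 3) ℝ (ℝ × ℝ) := ⟨_, hind, htop⟩
  have hBr : Set.range B = {toR2 v0, toR2 v1, toR2 v2} := by
    change Set.range ![toR2 v0, toR2 v1, toR2 v2] = _
    rw [Matrix.range_cons, Matrix.range_cons_cons_empty]
    rfl
  have hsum : ∀ x, B.coord 0 x + B.coord 1 x + B.coord 2 x = 1 := by
    intro x
    have := B.sum_coord_apply_eq_one x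
    rwa [Fin.sum_univ_three] at this
  have hcomb : ∀ x : ℝ × ℝ, B.coord 0 x • toR2 v0 + B.coord 1 x • toR2 v1 + B.coord 2 x • toR2 v2 = x := by
    intro x
    have := B.linear_combination_coord_eq_self x
    rwa [Fin.sum_univ_three] at this
  have hx1 : ∀ x : ℝ × ℝ, B.coord 1 x * (v1.1 - v0.1) + B.coord 2 x * (v2.1 - v0.1) = x.1 - v0.1 := by
    intro x
    have h := congrArg Prod.fst (hcomb x)
    simp only [toR2, Prod.fst_add, Prod.smul_fst, smul_eq_mul] at h
    linear_combination h - (v0.1 : ℝ) * hsum x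
  have hx2 : ∀ x : ℝ × ℝ, B.coord 1 x * (v1.2 - v0.2) + B.coord 2 x * (v2.2 - v0.2) = x.2 - v0.2 := by
    intro x
    have h := congrArg Prod.snd (hcomb x)
    simp only [toR2, Prod.snd_add, Prod.smul_snd, smul_eq_mul] at h
    linear_combination h - (v0.2 : ℝ) * hsum x
  constructor
  · intro h0
    have h0' : ((v1.1 : ℝ) - v0.1) * (v2.2 - v0.2) - (v1.2 - v0.2) * (v2.1 - v0.1) = 0 := by
      exact_mod_cast h0
    -- every point of the plane would lie on a line
    have hall : ∀ x : ℝ × ℝ, ((v2.2 : ℝ) - v0.2) * (x.1 - v0.1) = (v2.1 - v0.1) * (x.2 - v0.2) := by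
      intro x
      rw [← hx1, ← hx2]; linear_combination B.coord 1 x * h0'
    have hall' : ∀ x : ℝ × ℝ, ((v1.2 : ℝ) - v0.2) * (x.1 - v0.1) = (v1.1 - v0.1) * (x.2 - v0.2) := by
      intro x
      rw [← hx1, ← hx2]; linear_combination - B.coord 2 x * h0'
    have a1 := hall (v0.1 + 1, v0.2)
    have a2 := hall (v0.1, v0.2 + 1)
    have a3 := hall' (v0.1 + 1, v0.2)
    have a4 := hall' (v0.1, v0.2 + 1)
    have k := hx1 (v0.1 + 1, v0.2)
    simp only [add_sub_cancel_left, sub_self, mul_one, mul_zero] at a1 a2 a3 a4 k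
    rw [← a2, ← a4] at k
    simp at k
  · intro hN z
    set p1 := v1.1 - v0.1 with hp1
    set p2 := v1.2 - v0.2 with hp2
    set q1 := v2.1 - v0.1 with hq1
    set q2 := v2.2 - v0.2 with hq2
    have hNR : (0 : ℝ) < (p1 * q2 - p2 * q1 : ℤ) := by exact_mod_cast hN
    have hS : B.coord 1 (toR2 z) * (p1 * q2 - p2 * q1 : ℤ) =
        ((q2 * (z - v0).1 - q1 * (z - v0).2 : ℤ) : ℝ) := by
      have u1 := hx1 (toR2 z)
      have u2 := hx2 (toR2 z)
      simp only [toR2] at u1 u2 ⊢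
      simp only [hp1, hp2, hq1, hq2, Prod.fst_sub, Prod.snd_sub]
      push_cast
      linear_combination ((v2.2 : ℝ) - v0.2) * u1 - ((v2.1 : ℝ) - v0.1) * u2
    have hT : B.coord 2 (toR2 z) * (p1 * q2 - p2 * q1 : ℤ) =
        ((p1 * (z - v0).2 - p2 * (z - v0).1 : ℤ) : ℝ) := by
      have u1 := hx1 (toR2 z)
      have u2 := hx2 (toR2 z)
      simp only [toR2] at u1 u2 ⊢
      simp only [hp1, hp2, hq1, hq2, Prod.fst_sub, Prod.snd_sub]
      push_cast
      linear_combination ((v1.1 : ℝ) - v0.1) * u2 - ((v1.2 : ℝ) - v0.2) * u1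
    have hR : B.coord 0 (toR2 z) * (p1 * q2 - p2 * q1 : ℤ) =
        (((p1 * q2 - p2 * q1) - ((q2 * (z - v0).1 - q1 * (z - v0).2) +
          (p1 * (z - v0).2 - p2 * (z - v0).1)) : ℤ) : ℝ) := by
      rw [Int.cast_sub (p1 * q2 - p2 * q1), Int.cast_add, ← hS, ← hT]
      linear_combination ((p1 * q2 - p2 * q1 : ℤ) : ℝ) * hsum (toR2 z)
    have pos : ∀ (r : ℝ) (m : ℤ), r * (p1 * q2 - p2 * q1 : ℤ) = (m : ℝ) → (0 < r ↔ 0 < m) := by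
      intro r m h
      rw [← mul_pos_iff_of_pos_right hNR, h, Int.cast_pos]
    have nn : ∀ (r : ℝ) (m : ℤ), r * (p1 * q2 - p2 * q1 : ℤ) = (m : ℝ) → (0 ≤ r ↔ 0 ≤ m) := by
      intro r m h
      rw [← mul_nonneg_iff_of_pos_right hNR, h, Int.cast_nonneg_iff]
    have hint : toR2 z ∈ interior (convexHull ℝ {toR2 v0, toR2 v1, toR2 v2}) ↔
        z - v0 ∈ inSet p1 p2 q1 q2 := by
      rw [← hBr, B.interior_convexHull]
      change (∀ i, 0 < B.coord i (toR2 z)) ↔ _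
      rw [fin3, pos _ _ hS, pos _ _ hT, pos _ _ hR]
      simp only [inSet, Set.mem_ofPred_eq]
      rw [sub_pos]; tauto
    refine ⟨hint, ?_⟩
    have hclosed : IsClosed (convexHull ℝ {toR2 v0, toR2 v1, toR2 v2}) :=
      (Set.Finite.isCompact_convexHull (𝕜 := ℝ) (by simp)).isClosed
    rw [hclosed.frontier_eq, Set.mem_sdiff, hint]
    rw [← hBr, B.convexHull_eq_nonneg_coord]
    change (∀ i, 0 ≤ B.coord i (toR2 z)) ∧ _ ↔ _
    rw [fin3, nn _ _ hS, nn _ _ hT, nn _ _ hR]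
    simp only [inSet, bdSet, Set.mem_ofPred_eq]
    rw [sub_nonneg]; tauto

lemma ncard_shift (s : Set (ℤ × ℤ)) (v : ℤ × ℤ) : Set.ncard {z | z - v ∈ s} = s.ncard := by
  rw [← Set.ncard_image_of_injective s (add_left_injective v)]
  congr 1
  ext z
  simp only [Set.mem_ofPred_eq, Set.mem_image]
  constructor
  · intro h; exact ⟨_, h, by simp⟩
  · rintro ⟨w, hw, rfl⟩; simpa using hw

lemma oriented (c : ℤ) (hc : 2 ≤ c) (v0 v1 v2 : ℤ × ℤ)
    (hind : AffineIndependent ℝ ![toR2 v0, toR2 v1, toR2 v2])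
    (hN : 0 < (v1.1 - v0.1) * (v2.2 - v0.2) - (v1.2 - v0.2) * (v2.1 - v0.1))
    (T : Set (ℝ × ℝ)) (hT : T = convexHull ℝ {toR2 v0, toR2 v1, toR2 v2})
    (h1 : ((c : ℝ) - 1) / 2 * (bcount T : ℝ) - ((c : ℝ) - 1) < (icount T : ℝ))
    (h2 : (icount T : ℝ) < (c : ℝ) / 2 * (bcount T : ℝ) - (c : ℝ) * ((c : ℝ) + 2)) : False := by
  have hm := (tri_mem v0 v1 v2 hind).2 hN
  rw [← hT] at hm
  refine core c _ _ _ _ hc hN (bcount T) (icount T) ?_ ?_ ?_ ?_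
  · rw [← ncard_shift _ v0]
    unfold bcount
    congr 1
    ext z
    exact (hm z).2
  · rw [← ncard_shift _ v0]
    unfold icount
    congr 1
    ext z
    exact (hm z).1
  · have : ((c : ℝ) - 1) * (bcount T - 2) < 2 * (icount T : ℝ) := by linarith
    exact_mod_cast this
  · have : 2 * (icount T : ℝ) < c * bcount T - 2 * c * (c + 2) := by linarith
    exact_mod_cast this

/-- **Main theorem.** For every integer `c ≥ 2` there is no lattice triangle `T` with
`((c−1)/2)·b(T) − (c−1) < i(T) < (c/2)·b(T) − c(c+2)`. -/
theorem no_lattice_triangle_in_open_cone (c : ℤ) (hc : 2 ≤ c) :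
    ¬ ∃ T : Set (ℝ × ℝ), IsLatticeTriangle T ∧
      ((c : ℝ) - 1) / 2 * (bcount T : ℝ) - ((c : ℝ) - 1) < (icount T : ℝ) ∧
      (icount T : ℝ) < (c : ℝ) / 2 * (bcount T : ℝ) - (c : ℝ) * ((c : ℝ) + 2) := by
  rintro ⟨T, ⟨v0, v1, v2, hind, hT⟩, h1, h2⟩
  rcases lt_or_gt_of_ne (tri_mem v0 v1 v2 hind).1 with h | h
  · refine oriented c hc v0 v2 v1 hind.comm_right (by linarith) T ?_ h1 h2
    rw [hT, Set.pair_comm]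
  · exact oriented c hc v0 v1 v2 hind h T hT h1 h2
end

section
/- A pair (b, i) of nonnegative integers equals (b(T), i(T)) for some lattice triangle T if and only if there exist integers A, B, C with A > 0 and 0 ≤ B < C such that b = A + gcd(B, C) + gcd(B − A, C) and i = (A·C − b)/2 + 1. -/
open MeasureTheory

namespace LTri

/-- Integer cross product of `q - p` and `z - p`. -/
def cr (p q z : ℤ × ℤ) : ℤ := (q.1 - p.1) * (z.2 - p.2) - (q.2 - p.2) * (z.1 - p.1)

lemma affInd_iff (v0 v1 v2 : ℤ × ℤ) :
    AffineIndependent ℝ ![toR2 v0, toR2 v1, toR2 v2] ↔ cr v0 v1 v2 ≠ 0 := by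
  have e : AffineIndependent ℝ ![toR2 v0, toR2 v1, toR2 v2] ↔
      LinearIndependent ℝ ![toR2 v1 - toR2 v0, toR2 v2 - toR2 v0] := by
    rw [affineIndependent_iff_linearIndependent_vsub ℝ _ (0 : Fin 3),
      ← linearIndependent_equiv (finSuccAboveEquiv (0 : Fin 3))]
    apply iff_of_eq
    congr 1
    funext i
    fin_cases i <;> rfl
  rw [e, LinearIndependent.pair_iff]
  have hD : ((cr v0 v1 v2 : ℤ) : ℝ) = ((v1.1 : ℝ) - v0.1) * (v2.2 - v0.2)
      - (v1.2 - v0.2) * (v2.1 - v0.1) := by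
    simp [cr]
  constructor
  · intro h h0
    rw [h0] at hD
    simp only [toR2, Prod.mk_sub_mk, Prod.smul_mk, Prod.mk_add_mk, Prod.mk_eq_zero, smul_eq_mul] at h
    push_cast at hD
    have h1 := h (v2.2 - v0.2) (-(v1.2 - v0.2)) ⟨by linarith, by ring⟩
    have h2 := h (v2.1 - v0.1) (-(v1.1 - v0.1)) ⟨by ring, by linarith⟩
    have h3 := h 1 0 ⟨by linarith [h1.2, h2.2], by linarith [h1.2, h2.2]⟩
    exact one_ne_zero h3.1
  · intro h s t hst
    have hD0 : ((cr v0 v1 v2 : ℤ) : ℝ) ≠ 0 := by exact_mod_cast h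
    simp only [toR2, Prod.mk_sub_mk, Prod.smul_mk, Prod.mk_add_mk, Prod.mk_eq_zero, smul_eq_mul] at hst
    obtain ⟨a, b⟩ := hst
    constructor
    · have : s * (cr v0 v1 v2 : ℤ) = 0 := by
        rw [hD]; linear_combination ((v2.2 : ℝ) - v0.2) * a - ((v2.1 : ℝ) - v0.1) * b
      exact (mul_eq_zero.1 this).resolve_right hD0
    · have : t * (cr v0 v1 v2 : ℤ) = 0 := by
        rw [hD]; linear_combination ((v1.1 : ℝ) - v0.1) * b - ((v1.2 : ℝ) - v0.2) * a
      exact (mul_eq_zero.1 this).resolve_right hD0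

lemma mem_tri (v0 v1 v2 : ℤ × ℤ) (hD : 0 < cr v0 v1 v2) (z : ℤ × ℤ) :
    (toR2 z ∈ convexHull ℝ {toR2 v0, toR2 v1, toR2 v2} ↔
      0 ≤ cr v0 v1 z ∧ 0 ≤ cr v1 v2 z ∧ 0 ≤ cr v2 v0 z) ∧
    (toR2 z ∈ interior (convexHull ℝ {toR2 v0, toR2 v1, toR2 v2}) ↔
      0 < cr v0 v1 z ∧ 0 < cr v1 v2 z ∧ 0 < cr v2 v0 z) := by
  have hai := (affInd_iff v0 v1 v2).2 hD.ne'
  have htop : affineSpan ℝ (Set.range ![toR2 v0, toR2 v1, toR2 v2]) = ⊤ := by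
    rw [hai.affineSpan_eq_top_iff_card_eq_finrank_add_one]
    simp
  let bs : AffineBasis (Fin 3) ℝ (ℝ × ℝ) := ⟨![toR2 v0, toR2 v1, toR2 v2], hai, htop⟩
  have hr : ({toR2 v0, toR2 v1, toR2 v2} : Set (ℝ × ℝ)) = Set.range bs := by
    change _ = Set.range ![toR2 v0, toR2 v1, toR2 v2]
    ext w
    simp
    tauto
  have hsum := bs.sum_coord_apply_eq_one (toR2 z)
  have hlin := bs.linear_combination_coord_eq_self (toR2 z)
  rw [hr, bs.convexHull_eq_nonneg_coord, ← bs.convexHull_eq_nonneg_coord,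
    bs.interior_convexHull, bs.convexHull_eq_nonneg_coord]
  simp only [Set.mem_ofPred_eq, Fin.forall_fin_succ, Fin.sum_univ_three] at *
  have b0 : bs 0 = toR2 v0 := rfl
  have b1 : bs 1 = toR2 v1 := rfl
  have b2 : bs 2 = toR2 v2 := rfl
  rw [b0, b1, b2] at hlin
  have e0 : (0 : Fin 3) = 0 := rfl
  have e1 : (Fin.succ 0 : Fin 3) = 1 := rfl
  have e2 : (Fin.succ (Fin.succ 0) : Fin 3) = 2 := rfl
  simp only [e1, e2, IsEmpty.forall_iff, and_true]
  generalize bs.coord 0 (toR2 z) = c0 at *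
  generalize bs.coord 1 (toR2 z) = c1 at *
  generalize bs.coord 2 (toR2 z) = c2 at *
  simp only [toR2, Prod.smul_mk, Prod.mk_add_mk, Prod.mk.injEq, smul_eq_mul] at hlin
  obtain ⟨hx, hy⟩ := hlin
  have hDr : (0 : ℝ) < (cr v0 v1 v2 : ℤ) := by exact_mod_cast hD
  have hc0 : c0 = 1 - c1 - c2 := by linarith
  have k2 : ((cr v0 v1 z : ℤ) : ℝ) = c2 * (cr v0 v1 v2 : ℤ) := by
    simp only [cr]; push_cast; rw [← hx, ← hy, hc0]; ring
  have k0 : ((cr v1 v2 z : ℤ) : ℝ) = c0 * (cr v0 v1 v2 : ℤ) := by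
    simp only [cr]; push_cast; rw [← hx, ← hy, hc0]; ring
  have k1 : ((cr v2 v0 z : ℤ) : ℝ) = c1 * (cr v0 v1 v2 : ℤ) := by
    simp only [cr]; push_cast; rw [← hx, ← hy, hc0]; ring
  have P : ∀ (n : ℤ) (c : ℝ), (n : ℝ) = c * (cr v0 v1 v2 : ℤ) → ((0 ≤ n ↔ 0 ≤ c) ∧ (0 < n ↔ 0 < c)) := by
    intro n c h
    constructor
    · rw [← @Int.cast_nonneg_iff ℝ, h, mul_nonneg_iff_of_pos_right hDr]
    · rw [← @Int.cast_pos ℝ, h, mul_pos_iff_of_pos_right hDr]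
  rw [(P _ _ k0).1, (P _ _ k0).2, (P _ _ k1).1, (P _ _ k1).2, (P _ _ k2).1, (P _ _ k2).2]
  tauto

/-- integer boundary points -/
def bd (v0 v1 v2 : ℤ × ℤ) : Set (ℤ × ℤ) :=
  {z | (0 ≤ cr v0 v1 z ∧ 0 ≤ cr v1 v2 z ∧ 0 ≤ cr v2 v0 z) ∧
    ¬ (0 < cr v0 v1 z ∧ 0 < cr v1 v2 z ∧ 0 < cr v2 v0 z)}

/-- integer interior points -/
def it (v0 v1 v2 : ℤ × ℤ) : Set (ℤ × ℤ) :=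
  {z | 0 < cr v0 v1 z ∧ 0 < cr v1 v2 z ∧ 0 < cr v2 v0 z}

lemma bcount_eq (v0 v1 v2 : ℤ × ℤ) (hD : 0 < cr v0 v1 v2) :
    bcount (convexHull ℝ {toR2 v0, toR2 v1, toR2 v2}) = (bd v0 v1 v2).ncard := by
  have hc : IsClosed (convexHull ℝ ({toR2 v0, toR2 v1, toR2 v2} : Set (ℝ × ℝ))) :=
    Set.Finite.isClosed_convexHull ℝ (by simp)
  unfold bcount bd
  congr 1
  ext z
  rw [hc.frontier_eq]
  simp only [Set.mem_ofPred_eq, Set.mem_sdiff, (mem_tri v0 v1 v2 hD z).1, (mem_tri v0 v1 v2 hD z).2]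

lemma icount_eq (v0 v1 v2 : ℤ × ℤ) (hD : 0 < cr v0 v1 v2) :
    icount (convexHull ℝ {toR2 v0, toR2 v1, toR2 v2}) = (it v0 v1 v2).ncard := by
  unfold icount it
  congr 1
  ext z
  simp only [Set.mem_ofPred_eq, (mem_tri v0 v1 v2 hD z).2]

lemma card_mult (B C : ℤ) (hC : 0 < C) :
    (((Finset.Ioo 0 C).filter (fun y => C ∣ B * y)).card : ℤ) = (Int.gcd B C : ℤ) - 1 := by
  set g : ℤ := (Int.gcd B C : ℤ) with hg
  have hgpos : 0 < g := by
    have : 0 < Int.gcd B C := Int.gcd_pos_of_ne_zero_right _ hC.ne'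
    omega
  obtain ⟨c, hc⟩ : g ∣ C := Int.gcd_dvd_right ..
  obtain ⟨d, hd⟩ : g ∣ B := Int.gcd_dvd_left ..
  have hcpos : 0 < c := by
    by_contra h
    nlinarith
  have hcop : IsCoprime c d := by
    rw [Int.isCoprime_iff_gcd_eq_one, Int.gcd_comm]
    have : Int.gcd (g * d) (g * c) = g.natAbs * Int.gcd d c := Int.gcd_mul_left ..
    rw [← hd, ← hc] at this
    have h2 : g = g * (Int.gcd d c : ℤ) := by
      conv_lhs => rw [hg, this]
      push_cast
      rw [abs_of_pos hgpos]
    have h3 : (Int.gcd d c : ℤ) = 1 := by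
      have : g * ((Int.gcd d c : ℤ) - 1) = 0 := by linarith
      rcases mul_eq_zero.1 this with h | h <;> omega
    exact_mod_cast h3
  have himg : (Finset.Ioo 0 C).filter (fun y => C ∣ B * y) = (Finset.Ioo 0 g).image (fun k => c * k) := by
    ext y
    simp only [Finset.mem_filter, Finset.mem_Ioo, Finset.mem_image]
    constructor
    · rintro ⟨⟨h1, h2⟩, h3⟩
      have : c ∣ y := by
        rw [hc, hd, mul_assoc] at h3
        exact hcop.dvd_of_dvd_mul_left (Int.dvd_of_mul_dvd_mul_left hgpos.ne' h3)
      obtain ⟨k, rfl⟩ := this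
      refine ⟨k, ⟨?_, ?_⟩, rfl⟩
      · exact (mul_pos_iff_of_pos_left hcpos).1 h1
      · rw [hc] at h2; nlinarith
    · rintro ⟨k, ⟨h1, h2⟩, rfl⟩
      refine ⟨⟨by positivity, by rw [hc]; nlinarith⟩, ?_⟩
      exact ⟨d * k, by rw [hc, hd]; ring⟩
  rw [himg, Finset.card_image_of_injective _ (fun a b h => by simpa [hcpos.ne'] using h)]
  simp
  omega

lemma sum_floor (B C : ℤ) (hC : 0 < C) :
    2 * ∑ y ∈ Finset.Ioo 0 C, (B * y / C) = (B - 1) * (C - 1) + (Int.gcd B C : ℤ) - 1 := by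
  have h1 : ∑ y ∈ Finset.Ioo 0 C, (B * y / C) = ∑ y ∈ Finset.Ioo 0 C, (B * (C - y) / C) := by
    refine Finset.sum_bij' (fun y _ => C - y) (fun y _ => C - y) ?_ ?_ ?_ ?_ ?_ <;>
      intro y hy <;> simp only [Finset.mem_Ioo] at * <;> first | omega | simp
  have h2 : ∀ y ∈ Finset.Ioo 0 C, B * y / C + B * (C - y) / C
      = (B - 1) + (if C ∣ B * y then 1 else 0) := by
    intro y _
    have : B * (C - y) = - (B * y) + B * C := by ring
    rw [this, Int.add_mul_ediv_right _ _ hC.ne']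
    split_ifs with h
    · obtain ⟨k, hk⟩ := h
      rw [hk, ← mul_neg, Int.mul_ediv_cancel_left _ hC.ne', Int.mul_ediv_cancel_left _ hC.ne']
      ring
    · have a1 := Int.mul_ediv_add_emod (B * y) C
      have a2 : 0 < B * y % C := lt_of_le_of_ne (Int.emod_nonneg _ hC.ne')
        (fun e => h (Int.dvd_of_emod_eq_zero e.symm))
      have a3 := Int.emod_lt_of_pos (B * y) hC
      have : -(B * y) / C = -(B * y / C) - 1 := by
        apply le_antisymm
        · apply Int.le_of_lt_add_one
          rw [Int.ediv_lt_iff_lt_mul hC]; nlinarith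
        · rw [Int.le_ediv_iff_mul_le hC]; nlinarith
      omega
  calc 2 * ∑ y ∈ Finset.Ioo 0 C, (B * y / C)
      = ∑ y ∈ Finset.Ioo 0 C, (B * y / C + B * (C - y) / C) := by
        rw [Finset.sum_add_distrib, ← h1]; ring
    _ = _ := by
        rw [Finset.sum_congr rfl h2, Finset.sum_add_distrib, Finset.sum_boole, card_mult B C hC]
        have hcc : ((C.toNat - 1 : ℕ) : ℤ) = C - 1 := by omega
        simp [hcc]
        ring

lemma it_card (A B C : ℤ) (hA : 0 < A) (hC : 0 < C) :
    2 * ((it (0, 0) (A, 0) (B, C)).ncard : ℤ)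
      = A * C - (A + (Int.gcd B C : ℤ) + (Int.gcd (B - A) C : ℤ)) + 2 := by
  classical
  let F : Finset (Σ _ : ℤ, ℤ) :=
    (Finset.Ioo 0 C).sigma fun y => Finset.Ioo (B * y / C) (A - ((A - B) * y) / C)
  have hset : it (0, 0) (A, 0) (B, C) = ((F.image fun s => (s.2, s.1) : Finset (ℤ × ℤ)) : Set (ℤ × ℤ)) := by
    ext ⟨x, y⟩
    simp only [it, cr, Set.mem_ofPred_eq, Finset.coe_image, Set.mem_image, Finset.mem_coe, F,
      Finset.mem_sigma, Finset.mem_Ioo, Prod.mk.injEq, Sigma.exists]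
    have q1 : B * y / C < x ↔ B * y < x * C := Int.ediv_lt_iff_lt_mul hC
    have q2 : x < A - ((A - B) * y) / C ↔ (A - B) * y < (A - x) * C := by
      rw [← Int.ediv_lt_iff_lt_mul hC]; omega
    constructor
    · rintro ⟨h1, h2, h3⟩
      have hy : 0 < y := by
        have : 0 < A * y := by linarith
        exact (mul_pos_iff_of_pos_left hA).1 this
      refine ⟨y, x, ⟨⟨hy, ?_⟩, q1.2 (by linarith), q2.2 (by linarith)⟩, rfl, rfl⟩
      by_contra h
      nlinarith
    · rintro ⟨y', x', ⟨⟨h1, h2⟩, h3, h4⟩, rfl, rfl⟩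
      have h3 := q1.1 h3
      have h4 := q2.1 h4
      have := mul_pos hA h1
      refine ⟨by linarith, by linarith, by linarith⟩
  have hinj : Function.Injective (fun s : (Σ _ : ℤ, ℤ) => (s.2, s.1)) := by
    rintro ⟨a, b⟩ ⟨c, d⟩ h
    simp only [Prod.mk.injEq] at h
    obtain ⟨rfl, rfl⟩ := h
    rfl
  rw [hset, Set.ncard_coe_finset, Finset.card_image_of_injective _ hinj, Finset.card_sigma]
  push_cast
  have hrow : ∀ y ∈ Finset.Ioo 0 C,
      ((Finset.Ioo (B * y / C) (A - ((A - B) * y) / C)).card : ℤ)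
        = (A - 1) - B * y / C - (A - B) * y / C := by
    intro y hy
    rw [Finset.mem_Ioo] at hy
    rw [Int.card_Ioo]
    have a1 := Int.mul_ediv_add_emod (B * y) C
    have a2 := Int.emod_nonneg (B * y) hC.ne'
    have b1 := Int.mul_ediv_add_emod ((A - B) * y) C
    have b2 := Int.emod_nonneg ((A - B) * y) hC.ne'
    have : B * y / C + (A - B) * y / C < A := by
      by_contra h
      nlinarith
    omega
  rw [Finset.sum_congr rfl hrow, Finset.sum_sub_distrib, Finset.sum_sub_distrib]
  have s1 := sum_floor B C hC
  have s2 := sum_floor (A - B) C hC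
  have s3 : Int.gcd (A - B) C = Int.gcd (B - A) C := by
    rw [← Int.neg_gcd, neg_sub]
  rw [s3] at s2
  have s4 : ∑ y ∈ Finset.Ioo 0 C, (A - 1) = (A - 1) * (C - 1) := by
    have hcc : ((C.toNat - 1 : ℕ) : ℤ) = C - 1 := by omega
    simp [hcc]
    ring
  rw [s4]
  linarith

lemma bd_card (A B C : ℤ) (hA : 0 < A) (hC : 0 < C) :
    ((bd (0, 0) (A, 0) (B, C)).ncard : ℤ)
      = A + (Int.gcd B C : ℤ) + (Int.gcd (B - A) C : ℤ) := by
  classical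
  let F1 : Finset (ℤ × ℤ) := (Finset.Icc 0 A).image fun x => (x, 0)
  let F2 : Finset (ℤ × ℤ) := {(B, C)}
  let F3 : Finset (ℤ × ℤ) :=
    ((Finset.Ioo 0 C).filter fun y => C ∣ B * y).image fun y => (B * y / C, y)
  let F4 : Finset (ℤ × ℤ) :=
    ((Finset.Ioo 0 C).filter fun y => C ∣ (B - A) * y).image fun y => (A + (B - A) * y / C, y)
  have m1 : ∀ x y : ℤ, (x, y) ∈ F1 ↔ 0 ≤ x ∧ x ≤ A ∧ y = 0 := by
    intro x y
    simp only [F1, Finset.mem_image, Finset.mem_Icc, Prod.mk.injEq]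
    constructor
    · rintro ⟨a, h, rfl, rfl⟩; exact ⟨h.1, h.2, rfl⟩
    · rintro ⟨h, h', rfl⟩; exact ⟨x, ⟨h, h'⟩, rfl, rfl⟩
  have m2 : ∀ x y : ℤ, (x, y) ∈ F2 ↔ x = B ∧ y = C := by
    intro x y; simp [F2]
  have m3 : ∀ x y : ℤ, (x, y) ∈ F3 ↔ (0 < y ∧ y < C) ∧ B * y = C * x := by
    intro x y
    simp only [F3, Finset.mem_image, Finset.mem_filter, Finset.mem_Ioo, Prod.mk.injEq]
    constructor
    · rintro ⟨a, ⟨h, k, hk⟩, rfl, rfl⟩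
      refine ⟨h, ?_⟩
      rw [hk, Int.mul_ediv_cancel_left _ hC.ne']
    · rintro ⟨h, h'⟩
      exact ⟨y, ⟨h, ⟨x, h'⟩⟩, by rw [h', Int.mul_ediv_cancel_left _ hC.ne'], rfl⟩
  have m4 : ∀ x y : ℤ, (x, y) ∈ F4 ↔ (0 < y ∧ y < C) ∧ (B - A) * y = C * (x - A) := by
    intro x y
    simp only [F4, Finset.mem_image, Finset.mem_filter, Finset.mem_Ioo, Prod.mk.injEq]
    constructor
    · rintro ⟨a, ⟨h, k, hk⟩, rfl, rfl⟩
      refine ⟨h, ?_⟩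
      rw [hk, Int.mul_ediv_cancel_left _ hC.ne']; ring
    · rintro ⟨h, h'⟩
      exact ⟨y, ⟨h, ⟨x - A, h'⟩⟩, by rw [h', Int.mul_ediv_cancel_left _ hC.ne']; ring, rfl⟩
  have hset : bd (0, 0) (A, 0) (B, C) = ((F1 ∪ F2 ∪ F3 ∪ F4 : Finset (ℤ × ℤ)) : Set (ℤ × ℤ)) := by
    ext ⟨x, y⟩
    rw [Finset.mem_coe, Finset.mem_union, Finset.mem_union, Finset.mem_union, m1, m2, m3, m4]
    simp only [bd, cr, Set.mem_ofPred_eq]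
    constructor
    · rintro ⟨⟨h1, h2, h3⟩, h4⟩
      have hy : 0 ≤ y := by
        by_contra h
        nlinarith
      have hy' : y ≤ C := by
        by_contra h
        nlinarith
      rcases hy.eq_or_lt with rfl | hy
      · left; left; left
        refine ⟨?_, ?_, rfl⟩ <;> by_contra h <;> nlinarith
      rcases hy'.eq_or_lt with rfl | hy'
      · left; left; right
        refine ⟨?_, rfl⟩
        apply le_antisymm <;> by_contra h <;> nlinarith
      by_cases e : B * y = C * x
      · left; right; exact ⟨⟨hy, hy'⟩, e⟩
      · right
        refine ⟨⟨hy, hy'⟩, ?_⟩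
        by_contra e'
        apply h4
        have := mul_pos hA hy
        refine ⟨by linarith, lt_of_le_of_ne h2 ?_, lt_of_le_of_ne h3 ?_⟩
        · intro h; apply e'; linarith
        · intro h; apply e; linarith
    · rintro (((⟨h1, h2, rfl⟩ | ⟨rfl, rfl⟩) | ⟨⟨h1, h2⟩, h3⟩) | ⟨⟨h1, h2⟩, h3⟩)
      · refine ⟨⟨by nlinarith, by nlinarith, by nlinarith⟩, ?_⟩
        rintro ⟨h, -⟩; simp at h
      · refine ⟨⟨by nlinarith, by nlinarith, by nlinarith⟩, ?_⟩
        rintro ⟨-, h, -⟩; linarith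
      · refine ⟨⟨by nlinarith, by nlinarith, by nlinarith⟩, ?_⟩
        rintro ⟨-, -, h⟩; linarith
      · refine ⟨⟨by nlinarith, by nlinarith, by nlinarith⟩, ?_⟩
        rintro ⟨-, h, -⟩; linarith
  have d12 : Disjoint F1 F2 := by
    rw [Finset.disjoint_left]
    rintro ⟨x, y⟩ h h'
    rw [m1] at h; rw [m2] at h'; omega
  have d123 : Disjoint (F1 ∪ F2) F3 := by
    rw [Finset.disjoint_left]
    rintro ⟨x, y⟩ h h'
    rw [Finset.mem_union, m1, m2] at h; rw [m3] at h'; omega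
  have d1234 : Disjoint (F1 ∪ F2 ∪ F3) F4 := by
    rw [Finset.disjoint_left]
    rintro ⟨x, y⟩ h h'
    rw [Finset.mem_union, Finset.mem_union, m1, m2, m3] at h; rw [m4] at h'
    rcases h with h | h
    · omega
    · have : A * (C - y) = 0 := by linarith [h.2, h'.2]
      rcases mul_eq_zero.1 this with h | h <;> omega
  rw [hset, Set.ncard_coe_finset, Finset.card_union_of_disjoint d1234,
    Finset.card_union_of_disjoint d123, Finset.card_union_of_disjoint d12]
  have c1 : (F1.card : ℤ) = A + 1 := by
    rw [Finset.card_image_of_injective _ (fun a b h => by simpa using h), Int.card_Icc]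
    omega
  have c2 : F2.card = 1 := Finset.card_singleton _
  have c3 : (F3.card : ℤ) = Int.gcd B C - 1 := by
    rw [Finset.card_image_of_injective _ (fun a b h => (Prod.mk.inj h).2), card_mult B C hC]
  have c4 : (F4.card : ℤ) = Int.gcd (B - A) C - 1 := by
    rw [Finset.card_image_of_injective _ (fun a b h => (Prod.mk.inj h).2), card_mult (B - A) C hC]
  push_cast
  rw [c1, c2, c3, c4]
  push_cast
  ring

lemma normal_form (v0 v1 v2 : ℤ × ℤ) (hD : 0 < cr v0 v1 v2) :
    ∃ (A B C : ℤ), 0 < A ∧ 0 ≤ B ∧ B < C ∧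
      (bd v0 v1 v2).ncard = (bd (0, 0) (A, 0) (B, C)).ncard ∧
      (it v0 v1 v2).ncard = (it (0, 0) (A, 0) (B, C)).ncard := by
  obtain ⟨a0, b0⟩ := v0
  obtain ⟨a1, b1⟩ := v1
  obtain ⟨a2, b2⟩ := v2
  simp only [cr] at hD
  set A : ℤ := (Int.gcd (a1 - a0) (b1 - b0) : ℤ) with hAdef
  have hA : 0 < A := by
    have h0 : A ≠ 0 := by
      intro h
      rw [hAdef] at h
      have h' : Int.gcd (a1 - a0) (b1 - b0) = 0 := by exact_mod_cast h
      rw [Int.gcd_eq_zero_iff] at h'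
      rw [h'.1, h'.2] at hD
      simp at hD
    omega
  obtain ⟨r, hr⟩ : A ∣ a1 - a0 := Int.gcd_dvd_left ..
  obtain ⟨s, hs⟩ : A ∣ b1 - b0 := Int.gcd_dvd_right ..
  have hbez := Int.gcd_eq_gcd_ab (a1 - a0) (b1 - b0)
  rw [← hAdef] at hbez
  generalize Int.gcdA (a1 - a0) (b1 - b0) = p at hbez
  generalize Int.gcdB (a1 - a0) (b1 - b0) = q at hbez
  have hpq : r * p + s * q = 1 := by
    have : A * (r * p + s * q - 1) = 0 := by
      rw [hr, hs] at hbez; linarith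
    rcases mul_eq_zero.1 this with h | h <;> omega
  clear_value A
  obtain ⟨C, hC⟩ : ∃ C, C = r * (b2 - b0) - s * (a2 - a0) := ⟨_, rfl⟩
  have hCpos : 0 < C := by
    rw [hr, hs] at hD
    have : 0 < A * C := by rw [hC]; linarith
    exact (mul_pos_iff_of_pos_left hA).1 this
  obtain ⟨k, hk⟩ : ∃ k, k = (p * (a2 - a0) + q * (b2 - b0)) / C := ⟨_, rfl⟩
  obtain ⟨B, hB⟩ : ∃ B, B = (p * (a2 - a0) + q * (b2 - b0)) % C := ⟨_, rfl⟩
  have hB' : B = (p + k * s) * (a2 - a0) + (q - k * r) * (b2 - b0) := by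
    have := Int.mul_ediv_add_emod (p * (a2 - a0) + q * (b2 - b0)) C
    rw [← hk, ← hB] at this
    rw [hC] at this
    linarith
  obtain ⟨P, hP⟩ : ∃ P, P = p + k * s := ⟨_, rfl⟩
  obtain ⟨Q, hQ⟩ : ∃ Q, Q = q - k * r := ⟨_, rfl⟩
  have hPQ : r * P + s * Q = 1 := by rw [hP, hQ]; linarith
  rw [← hP, ← hQ] at hB'
  have hB0 : 0 ≤ B := hB ▸ Int.emod_nonneg _ hCpos.ne'
  have hB1 : B < C := hB ▸ Int.emod_lt_of_pos _ hCpos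
  refine ⟨A, B, C, hA, hB0, hB1, ?_⟩
  let f : ℤ × ℤ → ℤ × ℤ := fun z =>
    (P * (z.1 - a0) + Q * (z.2 - b0), r * (z.2 - b0) - s * (z.1 - a0))
  have hcr : ∀ u v w, cr (f u) (f v) (f w) = cr u v w := by
    rintro ⟨u1, u2⟩ ⟨v1, v2⟩ ⟨w1, w2⟩
    simp only [cr, f]
    linear_combination ((v1 - u1) * (w2 - u2) - (v2 - u2) * (w1 - u1)) * hPQ
  have f0 : f (a0, b0) = (0, 0) := by simp [f]
  have f1 : f (a1, b1) = (A, 0) := by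
    simp only [f, hr, hs, Prod.mk.injEq]
    exact ⟨by linear_combination A * hPQ, by ring⟩
  have f2 : f (a2, b2) = (B, C) := by
    simp only [f, hB', hC]
  have hbij : Function.Bijective f := by
    rw [Function.bijective_iff_has_inverse]
    refine ⟨fun w => (a0 + r * w.1 - Q * w.2, b0 + s * w.1 + P * w.2), ?_, ?_⟩
    · rintro ⟨x, y⟩
      simp only [f, Prod.mk.injEq]
      exact ⟨by linear_combination (x - a0) * hPQ, by linear_combination (y - b0) * hPQ⟩
    · rintro ⟨x, y⟩
      simp only [f, Prod.mk.injEq]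
      exact ⟨by linear_combination x * hPQ, by linear_combination y * hPQ⟩
  rw [← f0, ← f1, ← f2]
  have key : ∀ S S' : Set (ℤ × ℤ), (∀ z, z ∈ S ↔ f z ∈ S') → S.ncard = S'.ncard := by
    intro S S' h
    have : S' = f '' S := by
      ext w
      obtain ⟨z, rfl⟩ := hbij.2 w
      rw [← h, hbij.1.mem_set_image]
    rw [this, Set.ncard_image_of_injective _ hbij.1]
  constructor
  · apply key
    intro z
    simp only [bd, Set.mem_ofPred_eq, hcr]
  · apply key
    intro z
    simp only [it, Set.mem_ofPred_eq, hcr]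

end LTri

/-- Number-theoretic criterion for `(b, i)` to be realized by a lattice triangle:
`(b, i) ∈ 𝒯` iff there are integers `A, B, C` with `A > 0`, `0 ≤ B < C`,
`b = A + gcd(B, C) + gcd(B − A, C)` and `i = (A·C − b)/2 + 1`. -/
theorem lattice_triangle_bi_criterion (b i : ℕ) :
    (∃ T : Set (ℝ × ℝ), IsLatticeTriangle T ∧ bcount T = b ∧ icount T = i) ↔
      ∃ A B C : ℤ, 0 < A ∧ 0 ≤ B ∧ B < C ∧
        (b : ℤ) = A + (Int.gcd B C : ℤ) + (Int.gcd (B - A) C : ℤ) ∧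
        (i : ℤ) = (A * C - (b : ℤ)) / 2 + 1 := by
  constructor
  · rintro ⟨T, ⟨v0, v1, v2, hai, rfl⟩, hb, hi⟩
    rw [LTri.affInd_iff] at hai
    have main : ∀ v1 v2 : ℤ × ℤ, 0 < LTri.cr v0 v1 v2 →
        bcount (convexHull ℝ {toR2 v0, toR2 v1, toR2 v2}) = b →
        icount (convexHull ℝ {toR2 v0, toR2 v1, toR2 v2}) = i →
        ∃ A B C : ℤ, 0 < A ∧ 0 ≤ B ∧ B < C ∧
        (b : ℤ) = A + (Int.gcd B C : ℤ) + (Int.gcd (B - A) C : ℤ) ∧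
        (i : ℤ) = (A * C - (b : ℤ)) / 2 + 1 := by
      intro v1 v2 hD hb hi
      rw [LTri.bcount_eq _ _ _ hD] at hb
      rw [LTri.icount_eq _ _ _ hD] at hi
      obtain ⟨A, B, C, hA, hB, hBC, h1, h2⟩ := LTri.normal_form v0 v1 v2 hD
      have hC : 0 < C := by omega
      have e1 := LTri.bd_card A B C hA hC
      have e2 := LTri.it_card A B C hA hC
      rw [← h1, hb] at e1
      rw [← h2, hi] at e2
      exact ⟨A, B, C, hA, hB, hBC, e1, by omega⟩
    rcases lt_or_gt_of_ne hai with h | h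
    · apply main v2 v1
      · have : LTri.cr v0 v2 v1 = - LTri.cr v0 v1 v2 := by simp only [LTri.cr]; ring
        omega
      · rw [Set.pair_comm]; exact hb
      · rw [Set.pair_comm]; exact hi
    · exact main v1 v2 h hb hi
  · rintro ⟨A, B, C, hA, hB, hBC, hb, hi⟩
    have hC : 0 < C := by omega
    have hD : 0 < LTri.cr (0, 0) (A, 0) (B, C) := by
      simp only [LTri.cr]
      have := mul_pos hA hC
      linarith
    refine ⟨_, ⟨(0, 0), (A, 0), (B, C), (LTri.affInd_iff _ _ _).2 hD.ne', rfl⟩, ?_, ?_⟩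
    · rw [LTri.bcount_eq _ _ _ hD]
      have e1 := LTri.bd_card A B C hA hC
      omega
    · rw [LTri.icount_eq _ _ _ hD]
      have e2 := LTri.it_card A B C hA hC
      omega
end
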